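/- The four-dimensional metric ds² = 2 du [dr + ½(x r − x e^x − 2 κ₀ e^x c(u)²) du] + e^x (dx² + e^{2u} dy²), together with the null 2-form F = e^{x/2} c(u) du ∧ (−cos(y e^u / 2) dx + e^u sin(y e^u / 2) dy), is an exact solution of the Einstein–Maxwell equations (with vanishing cosmological constant) of Weyl type III; moreover it remains an exact solution of Einstein gravity coupled to any generalized electrodynamics with field equations dF = 0, *d*F̃ = 0 and energy-momentum tensor built from F and its covariant derivatives. -/

import Mathlib

open scoped BigOperators

noncomputable section

namespace VSI

/-! ### Basic setup: tensor fields on an `n`-dimensional coordinate chart -/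

/-- A point of an `n`-dimensional coordinate chart. -/
abbrev Pt (n : ℕ) := Fin n → ℝ

/-- A covariant tensor field of rank `k`, given by its components. -/
abbrev TensorField (n k : ℕ) := Pt n → (Fin k → Fin n) → ℝ

/-- A vector field, given by its components. -/
abbrev VecField (n : ℕ) := Pt n → Fin n → ℝ

/-- A field of `n × n` matrices (e.g. a metric). -/
abbrev MetricField (n : ℕ) := Pt n → Matrix (Fin n) (Fin n) ℝ

/-- Partial derivative of a scalar function along the `a`-th coordinate. -/
def pd {n : ℕ} (f : Pt n → ℝ) (a : Fin n) (x : Pt n) : ℝ :=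
  fderiv ℝ f x (Pi.single a 1)

/-- Partial derivative masked to the transverse directions (coordinates `≥ 2`). -/
def pdT {n : ℕ} (f : Pt n → ℝ) (a : Fin n) (x : Pt n) : ℝ :=
  if 2 ≤ (a : ℕ) then pd f a x else 0

/-- A function on the chart is independent of the coordinate `r` (coordinate number 1). -/
def IndepOfR {n : ℕ} {α : Type*} (f : Pt n → α) : Prop :=
  ∀ x x' : Pt n, (∀ i : Fin n, (i : ℕ) ≠ 1 → x i = x' i) → f x = f x'

/-- A smooth symmetric metric of Lorentzian signature `(-,+,…,+)`. -/
def IsLorentzMetric {n : ℕ} (g : MetricField n) : Prop :=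
  (∀ a b, ContDiff ℝ (⊤ : ℕ∞) fun x => g x a b) ∧ (∀ x, (g x).IsSymm) ∧
  (∀ x, ∃ P : Matrix (Fin n) (Fin n) ℝ, IsUnit P.det ∧
    P.transpose * g x * P = Matrix.diagonal fun i : Fin n => if (i : ℕ) = 0 then (-1 : ℝ) else 1)

/-- Metric pairing of two vectors at a point. -/
def gdot {n : ℕ} (g : MetricField n) (x : Pt n) (X Y : Fin n → ℝ) : ℝ :=
  ∑ a, ∑ b, g x a b * X a * Y b

/-- Index lowering of a vector field. -/
def lower {n : ℕ} (g : MetricField n) (ℓ : VecField n) (x : Pt n) (a : Fin n) : ℝ :=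
  ∑ b, g x a b * ℓ x b

/-- The 1-form (rank-1 covariant tensor field) associated with a vector field. -/
def lowerField {n : ℕ} (g : MetricField n) (ℓ : VecField n) : TensorField n 1 :=
  fun x idx => lower g ℓ x (idx 0)

/-- Christoffel symbols `Γ^a_{bc}` of the Levi-Civita connection of `g`. -/
def christoffel {n : ℕ} (g : MetricField n) (x : Pt n) (a b c : Fin n) : ℝ :=
  (1/2) * ∑ d, (g x)⁻¹ a d *
    (pd (fun y => g y d c) b x + pd (fun y => g y b d) c x - pd (fun y => g y b c) d x)

/-- Covariant derivative of a covariant tensor field; the new (derivative) index is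
the first index of the result. -/
def covD {n k : ℕ} (g : MetricField n) (T : TensorField n k) : TensorField n (k+1) :=
  fun x idx =>
    pd (fun y => T y fun m => idx m.succ) (idx 0) x
    - ∑ m : Fin k, ∑ e : Fin n,
        christoffel g x e (idx 0) (idx m.succ) * T x (Function.update (fun m' => idx m'.succ) m e)

/-- Iterated covariant derivative. -/
def covDIter {n k : ℕ} (g : MetricField n) (T : TensorField n k) : (I : ℕ) → TensorField n (k + I)
  | 0 => T
  | I + 1 => covD g (covDIter g T I)

/-! ### Scalar polynomial invariants and tensor concomitants -/

/-- A scheme describing a polynomial concomitant of a rank-`k` tensor field: a full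
metric contraction of a tensor product of covariant derivatives (of orders `ord j`)
of the field, with `r` free indices left over.  `m` is the number of contracted
index pairs; `slots` enumerates all index slots of the tensor product. -/
structure ConcomScheme (k r : ℕ) where
  N : ℕ
  hN : 0 < N
  ord : Fin N → ℕ
  m : ℕ
  slots : ((Fin m × Bool) ⊕ Fin r) ≃ (Σ j : Fin N, Fin (k + ord j))

/-- The value of a concomitant scheme: all contracted index pairs are contracted with
the inverse metric. -/
def ConcomScheme.value {k r : ℕ} (S : ConcomScheme k r) {n : ℕ} (g : MetricField n)
    (T : TensorField n k) : TensorField n r := fun x free =>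
  ∑ φ : Fin S.m × Bool → Fin n,
    (∏ i : Fin S.m, (g x)⁻¹ (φ (i, false)) (φ (i, true))) *
    ∏ j : Fin S.N, covDIter g T (S.ord j) x
      (fun s => Sum.elim φ free (S.slots.symm ⟨j, s⟩))

/-- All scalar polynomial invariants constructed from `T` and its covariant
derivatives up to order `I` vanish. -/
def IsVSIUpTo {n k : ℕ} (g : MetricField n) (T : TensorField n k) (I : ℕ) : Prop :=
  ∀ S : ConcomScheme k 0, (∀ j, S.ord j ≤ I) → ∀ x v, S.value g T x v = 0

/-- All scalar polynomial invariants of arbitrary order vanish. -/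
def IsVSI {n k : ℕ} (g : MetricField n) (T : TensorField n k) : Prop :=
  ∀ I : ℕ, IsVSIUpTo g T I

/-- All zeroth order scalar polynomial invariants of `T` vanish at the point `x`. -/
def IsVSI0At {n k : ℕ} (g : MetricField n) (T : TensorField n k) (x : Pt n) : Prop :=
  ∀ S : ConcomScheme k 0, (∀ j, S.ord j = 0) → ∀ v, S.value g T x v = 0

/-- A rank-`r` tensor field `G` is (polynomially) constructed from `T`, its covariant
derivatives of arbitrary order and the metric. -/
def IsConstructedFrom {n k r : ℕ} (g : MetricField n) (T : TensorField n k)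
    (G : TensorField n r) : Prop :=
  G ∈ Submodule.span ℝ {G' : TensorField n r | ∃ S : ConcomScheme k r, G' = S.value g T}

/-- A symmetric-2-tensor "correction" to the standard electromagnetic energy-momentum
tensor: constructed from `T` and its covariant derivatives, where each monomial either
contains at least three factors of the field or at least one covariant derivative
(i.e. it comes from a non-Maxwellian term of a generalized electrodynamics). -/
def IsCorrectionTensor {n k : ℕ} (g : MetricField n) (T : TensorField n k)
    (Tc : TensorField n 2) : Prop :=
  Tc ∈ Submodule.span ℝ {G : TensorField n 2 |
    ∃ S : ConcomScheme k 2, (3 ≤ S.N ∨ ∃ j, 1 ≤ S.ord j) ∧ G = S.value g T}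

/-! ### p-forms, type N, Lie derivative -/

def IsAlternating {n k : ℕ} (T : TensorField n k) : Prop :=
  ∀ (x : Pt n) (idx : Fin k → Fin n) (σ : Equiv.Perm (Fin k)),
    T x (idx ∘ σ) = ((Equiv.Perm.sign σ : ℤ) : ℝ) * T x idx

def IsSmoothT {n k : ℕ} (T : TensorField n k) : Prop :=
  ∀ idx, ContDiff ℝ (⊤ : ℕ∞) fun x => T x idx

/-- A smooth differential form (totally antisymmetric covariant tensor field). -/
def IsFormField {n k : ℕ} (T : TensorField n k) : Prop :=
  IsSmoothT T ∧ IsAlternating T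

def IsSmoothVec {n : ℕ} (ℓ : VecField n) : Prop :=
  ∀ a, ContDiff ℝ (⊤ : ℕ∞) fun x => ℓ x a

/-- A (nowhere vanishing, smooth) null vector field. -/
def IsNullField {n : ℕ} (g : MetricField n) (ℓ : VecField n) : Prop :=
  IsSmoothVec ℓ ∧ (∀ x, ℓ x ≠ 0) ∧ ∀ x, gdot g x (ℓ x) (ℓ x) = 0

/-- `ℓ^a F_{a b₁ … b_{p-1}} = 0`. -/
def ContractsFirstZero {n p : ℕ} [NeZero p] (ℓ : VecField n) (F : TensorField n p) : Prop :=
  ∀ (x : Pt n) (v : Fin p → Fin n), (∑ a, ℓ x a * F x (Function.update v 0 a)) = 0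

/-- `ℓ_{[a} F_{b₁ … b_p]} = 0`. -/
def WedgeWithZero {n p : ℕ} (g : MetricField n) (ℓ : VecField n) (F : TensorField n p) : Prop :=
  ∀ (x : Pt n) (idx : Fin (p+1) → Fin n),
    (∑ σ : Equiv.Perm (Fin (p+1)), ((Equiv.Perm.sign σ : ℤ) : ℝ) *
      (lower g ℓ x (idx (σ 0)) * F x (fun m => idx (σ m.succ)))) = 0

/-- The `p`-form `F` is of type N with multiple null direction `ℓ`. -/
def IsTypeN {n p : ℕ} [NeZero p] (g : MetricField n) (F : TensorField n p)
    (ℓ : VecField n) : Prop :=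
  IsNullField g ℓ ∧ ContractsFirstZero ℓ F ∧ WedgeWithZero g ℓ F

/-- Lie derivative of a covariant tensor field along a vector field. -/
def lieD {n k : ℕ} (ℓ : VecField n) (T : TensorField n k) : TensorField n k :=
  fun x idx =>
    (∑ a, ℓ x a * pd (fun y => T y idx) a x)
    + ∑ m : Fin k, ∑ a, pd (fun y => ℓ y a) (idx m) x * T x (Function.update idx m a)

/-! ### Optical properties: geodesic, Kundt -/

/-- `∇_b ℓ_a` (first index is the derivative index). -/
def nablaLow {n : ℕ} (g : MetricField n) (ℓ : VecField n) (x : Pt n) (b a : Fin n) : ℝ :=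
  covD g (lowerField g ℓ) x ![b, a]

/-- `ℓ` is geodesic: `ℓ^b ∇_b ℓ_a ∝ ℓ_a`. -/
def IsGeodesicField {n : ℕ} (g : MetricField n) (ℓ : VecField n) : Prop :=
  ∀ x, ∃ c : ℝ, ∀ a, (∑ b, ℓ x b * nablaLow g ℓ x b a) = c * lower g ℓ x a

/-- `ℓ` is affinely parameterized: `ℓ^b ∇_b ℓ_a = 0`. -/
def IsAffinelyParam {n : ℕ} (g : MetricField n) (ℓ : VecField n) : Prop :=
  ∀ x a, (∑ b, ℓ x b * nablaLow g ℓ x b a) = 0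

/-- `ℓ` is a Kundt null vector field: null, geodesic and with vanishing optical matrix
(expansion-free, shear-free and twist-free). -/
def IsKundt {n : ℕ} (g : MetricField n) (ℓ : VecField n) : Prop :=
  IsNullField g ℓ ∧ IsGeodesicField g ℓ ∧
  ∀ (x : Pt n) (X Y : Fin n → ℝ), gdot g x X (ℓ x) = 0 → gdot g x Y (ℓ x) = 0 →
    (∑ a, ∑ b, X a * Y b * nablaLow g ℓ x b a) = 0

/-! ### Curvature -/

/-- Fully lowered Riemann tensor `R_{abcd}`. -/
def riemann {n : ℕ} (g : MetricField n) : TensorField n 4 := fun x idx =>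
  ∑ e, g x (idx 0) e *
    (pd (fun y => christoffel g y e (idx 3) (idx 1)) (idx 2) x
     - pd (fun y => christoffel g y e (idx 2) (idx 1)) (idx 3) x
     + ∑ f', (christoffel g x e (idx 2) f' * christoffel g x f' (idx 3) (idx 1)
            - christoffel g x e (idx 3) f' * christoffel g x f' (idx 2) (idx 1)))

def ricci {n : ℕ} (g : MetricField n) (x : Pt n) (b d : Fin n) : ℝ :=
  ∑ a, ∑ c, (g x)⁻¹ a c * riemann g x ![a, b, c, d]

def ricciScalar {n : ℕ} (g : MetricField n) (x : Pt n) : ℝ :=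
  ∑ b, ∑ d, (g x)⁻¹ b d * ricci g x b d

def tracelessRicci {n : ℕ} (g : MetricField n) : TensorField n 2 := fun x idx =>
  ricci g x (idx 0) (idx 1) - ricciScalar g x / (n : ℝ) * g x (idx 0) (idx 1)

/-- Weyl tensor `C_{abcd}` (for `n ≥ 3`). -/
def weyl {n : ℕ} (g : MetricField n) : TensorField n 4 := fun x idx =>
  riemann g x idx
  - (1 / ((n : ℝ) - 2)) *
      (g x (idx 0) (idx 2) * ricci g x (idx 3) (idx 1)
       - g x (idx 0) (idx 3) * ricci g x (idx 2) (idx 1)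
       - g x (idx 1) (idx 2) * ricci g x (idx 3) (idx 0)
       + g x (idx 1) (idx 3) * ricci g x (idx 2) (idx 0))
  + (1 / (((n : ℝ) - 1) * ((n : ℝ) - 2))) * ricciScalar g x *
      (g x (idx 0) (idx 2) * g x (idx 3) (idx 1) - g x (idx 0) (idx 3) * g x (idx 2) (idx 1))

/-! ### Null frames, boost weights, algebraic types -/

/-- A null frame at a point: two null vectors `e 0 = ℓ`, `e 1 = n` with `ℓ·n = 1`, and
orthonormal spacelike vectors `e i`, `i ≥ 2`, orthogonal to both. -/
structure NullFrameAt {n : ℕ} [NeZero n] (g : MetricField n) (x : Pt n) where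
  e : Fin n → Fin n → ℝ
  h00 : gdot g x (e 0) (e 0) = 0
  h11 : gdot g x (e 1) (e 1) = 0
  h01 : gdot g x (e 0) (e 1) = 1
  h0i : ∀ i : Fin n, 2 ≤ (i : ℕ) → gdot g x (e 0) (e i) = 0
  h1i : ∀ i : Fin n, 2 ≤ (i : ℕ) → gdot g x (e 1) (e i) = 0
  hij : ∀ i j : Fin n, 2 ≤ (i : ℕ) → 2 ≤ (j : ℕ) →
    gdot g x (e i) (e j) = (if i = j then 1 else 0)

/-- Boost weight of a frame multi-index: `+1` for each contraction with `ℓ = e 0`,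
`-1` for each contraction with `n = e 1`. -/
def bw {n k : ℕ} (a : Fin k → Fin n) : ℤ :=
  ((Finset.univ.filter fun m => (a m : ℕ) = 0).card : ℤ)
  - ((Finset.univ.filter fun m => (a m : ℕ) = 1).card : ℤ)

/-- Frame components of a covariant tensor. -/
def frameComp {n k : ℕ} (T : TensorField n k) (e : Fin n → Fin n → ℝ) (x : Pt n)
    (a : Fin k → Fin n) : ℝ :=
  ∑ idx : Fin k → Fin n, T x idx * ∏ m, e (a m) (idx m)

/-- The tensor field `T` has boost order at most `b` with respect to the null
direction `ℓ`: in any null frame containing `ℓ`, all frame components of boost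
weight `> b` vanish.  `b = 0` is the aligned type II condition, `b = -1` type III. -/
def BoostOrderLE {n k : ℕ} [NeZero n] (g : MetricField n) (ℓ : VecField n)
    (T : TensorField n k) (b : ℤ) : Prop :=
  ∀ (x : Pt n) (fr : NullFrameAt g x), fr.e 0 = ℓ x →
    ∀ a : Fin k → Fin n, b < bw a → frameComp T fr.e x a = 0

/-- `g` is a degenerate Kundt metric with Kundt null direction `ℓ`: `ℓ` is Kundt and
the Riemann tensor together with its covariant derivatives of all orders is of aligned
type II with respect to `ℓ`. -/
def IsDegenerateKundt {n : ℕ} [NeZero n] (g : MetricField n) (ℓ : VecField n) : Prop :=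
  IsKundt g ℓ ∧ ∀ I : ℕ, BoostOrderLE g ℓ (covDIter g (riemann g) I) 0

/-! ### Exterior derivative, Hodge dual, Maxwell equations -/

/-- Exterior derivative (components, no normalization factor). -/
def extD {n k : ℕ} (F : TensorField n k) : TensorField n (k+1) := fun x idx =>
  ∑ m : Fin (k+1), (-1 : ℝ) ^ (m : ℕ) *
    pd (fun y => F y fun i => idx (m.succAbove i)) (idx m) x

/-- Sign of a self-map of `Fin k` (0 if not bijective). -/
def permSign {k : ℕ} (f : Fin k → Fin k) : ℤ :=
  if h : Function.Bijective f then Equiv.Perm.sign (Equiv.ofBijective f h) else 0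

/-- Raise all indices of a covariant tensor with the inverse metric. -/
def raiseAll {n k : ℕ} (g : MetricField n) (T : TensorField n k) : TensorField n k :=
  fun x idx => ∑ jdx : Fin k → Fin n, (∏ m, (g x)⁻¹ (idx m) (jdx m)) * T x jdx

/-- Hodge dual of a `p`-form (`p + q = n`), via the metric volume element
`√|det g| ε_{a₁…aₙ}`. -/
def hodge {n p q : ℕ} (h : p + q = n) (g : MetricField n) (F : TensorField n p) :
    TensorField n q := fun x idx =>
  (1 / (Nat.factorial p : ℝ)) *
    ∑ a : Fin p → Fin n, raiseAll g F x a *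
      (Real.sqrt |(g x).det| *
        ((permSign fun i => Fin.append a idx (Fin.cast h.symm i) : ℤ) : ℝ))

/-- Source-free Maxwell equations `dF = 0 = d*F` for a `p`-form (`p + q = n`). -/
def MaxwellEqs {n p q : ℕ} (h : p + q = n) (g : MetricField n) (F : TensorField n p) : Prop :=
  (∀ x idx, extD F x idx = 0) ∧ (∀ x idx, extD (hodge h g F) x idx = 0)

/-! ### Wedge products -/

def wedgeP {n a b : ℕ} (F : TensorField n a) (G : TensorField n b) : TensorField n (a+b) :=
  fun x idx => ∑ σ : Equiv.Perm (Fin (a+b)), ((Equiv.Perm.sign σ : ℤ) : ℝ) *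
    (F x fun i => idx (σ (Fin.castAdd b i))) * (G x fun j => idx (σ (Fin.natAdd a j)))

def wedgePow {n p : ℕ} (F : TensorField n p) : (k : ℕ) → TensorField n (p * k)
  | 0 => fun _ _ => 1
  | k + 1 => wedgeP (wedgePow F k) F

def castT {n a b : ℕ} (h : a = b) (T : TensorField n a) : TensorField n b :=
  fun x idx => T x fun i => idx (Fin.cast h i)

/-! ### Degenerate Kundt metrics in adapted coordinates -/

/-- The Kundt metric `ds² = 2 du (dr + H du + W_α dx^α) + g_{αβ} dx^α dx^β` in
coordinates `(u, r, x^α) = (x⁰, x¹, x^{α≥2})`. -/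
def kundtMetric {n : ℕ} (H : Pt n → ℝ) (W : Pt n → Fin n → ℝ) (hT : MetricField n) :
    MetricField n := fun x => Matrix.of fun a b =>
  if (a : ℕ) = 0 ∧ (b : ℕ) = 0 then 2 * H x
  else if ((a : ℕ) = 0 ∧ (b : ℕ) = 1) ∨ ((a : ℕ) = 1 ∧ (b : ℕ) = 0) then 1
  else if (a : ℕ) = 0 then W x b
  else if (b : ℕ) = 0 then W x a
  else if (a : ℕ) = 1 ∨ (b : ℕ) = 1 then 0
  else hT x a b

/-- A transverse (Riemannian) metric `g_{αβ}(u,x)`, stored as an `n×n` matrix padded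
by the identity on the coordinates `u, r`. -/
def IsTransverseMetric {n : ℕ} (hT : MetricField n) : Prop :=
  (∀ (x : Pt n) (a b : Fin n), ((a : ℕ) < 2 ∨ (b : ℕ) < 2) → hT x a b = (if a = b then 1 else 0)) ∧
  (∀ x, (hT x).IsSymm) ∧ (∀ a b, ContDiff ℝ (⊤ : ℕ∞) fun x => hT x a b) ∧
  IndepOfR hT ∧ (∀ x, (hT x).PosDef)

/-- Data of a degenerate Kundt metric: `W_α = r W¹_α + W⁰_α`,
`H = r² H² + r H¹ + H⁰`, transverse metric `hT`. -/
structure DegKundtData (n : ℕ) where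
  H2 : Pt n → ℝ
  H1 : Pt n → ℝ
  H0 : Pt n → ℝ
  W1 : Pt n → Fin n → ℝ
  W0 : Pt n → Fin n → ℝ
  hT : MetricField n

def DegKundtData.Hfun {n : ℕ} [NeZero n] (D : DegKundtData n) : Pt n → ℝ :=
  fun z => (z 1)^2 * D.H2 z + z 1 * D.H1 z + D.H0 z

def DegKundtData.Wfun {n : ℕ} [NeZero n] (D : DegKundtData n) : Pt n → Fin n → ℝ :=
  fun z b => z 1 * D.W1 z b + D.W0 z b

/-- The degenerate Kundt metric built from the data. -/
def DegKundtData.metric {n : ℕ} [NeZero n] (D : DegKundtData n) : MetricField n :=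
  kundtMetric D.Hfun D.Wfun D.hT

/-- Regularity and shape conditions on the degenerate Kundt data: the metric functions
depend only on `(u, x^α)` and are smooth, `W`'s are transverse. -/
def DegKundtData.Regular {n : ℕ} (D : DegKundtData n) : Prop :=
  IsTransverseMetric D.hT ∧
  IndepOfR D.H2 ∧ IndepOfR D.H1 ∧ IndepOfR D.H0 ∧ IndepOfR D.W1 ∧ IndepOfR D.W0 ∧
  ContDiff ℝ (⊤ : ℕ∞) D.H2 ∧ ContDiff ℝ (⊤ : ℕ∞) D.H1 ∧ ContDiff ℝ (⊤ : ℕ∞) D.H0 ∧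
  (∀ a, ContDiff ℝ (⊤ : ℕ∞) fun x => D.W1 x a) ∧ (∀ a, ContDiff ℝ (⊤ : ℕ∞) fun x => D.W0 x a) ∧
  (∀ (x : Pt n) (a : Fin n), (a : ℕ) < 2 → D.W1 x a = 0) ∧ (∀ (x : Pt n) (a : Fin n), (a : ℕ) < 2 → D.W0 x a = 0)

/-- The `(q+1)`-form `du ∧ f` built from a transverse `q`-form `f`. -/
def duWedge {n q : ℕ} (f : TensorField n q) : TensorField n (q+1) := fun x idx =>
  ∑ m : Fin (q+1), (-1 : ℝ) ^ (m : ℕ) * (if (idx m : ℕ) = 0 then 1 else 0) *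
    f x (fun i => idx (m.succAbove i))

/-- `f_{[α₂…α_p , α₁]} = 0`: `f` is closed in the transverse geometry. -/
def TransClosed {n q : ℕ} (f : TensorField n q) : Prop :=
  ∀ (x : Pt n) (v : Fin (q+1) → Fin n), (∀ i, 2 ≤ (v i : ℕ)) →
    (∑ m : Fin (q+1), (-1 : ℝ) ^ (m : ℕ) *
      pd (fun y => f y fun i => v (m.succAbove i)) (v m) x) = 0

/-- `(√g̃ f^{β α₁…α_{p-2}})_{,β} = 0`: `f` is co-closed in the transverse geometry. -/
def TransCoclosed {n q : ℕ} [NeZero q] (hT : MetricField n) (f : TensorField n q) : Prop :=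
  ∀ (x : Pt n) (v : Fin q → Fin n),
    (∑ b : Fin n, pd (fun y =>
      Real.sqrt (hT y).det * raiseAll hT f y (Function.update v 0 b)) b x) = 0

/-! ### Transverse curvature -/

def christoffelT {n : ℕ} (h : MetricField n) (x : Pt n) (a b c : Fin n) : ℝ :=
  (1/2) * ∑ d, (h x)⁻¹ a d *
    (pdT (fun y => h y d c) b x + pdT (fun y => h y b d) c x - pdT (fun y => h y b c) d x)

def covDT {n k : ℕ} (h : MetricField n) (T : TensorField n k) : TensorField n (k+1) :=
  fun x idx =>
    pdT (fun y => T y fun m => idx m.succ) (idx 0) x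
    - ∑ m : Fin k, ∑ e : Fin n,
        christoffelT h x e (idx 0) (idx m.succ) * T x (Function.update (fun m' => idx m'.succ) m e)

def riemannT {n : ℕ} (h : MetricField n) : TensorField n 4 := fun x idx =>
  ∑ e, h x (idx 0) e *
    (pdT (fun y => christoffelT h y e (idx 3) (idx 1)) (idx 2) x
     - pdT (fun y => christoffelT h y e (idx 2) (idx 1)) (idx 3) x
     + ∑ f', (christoffelT h x e (idx 2) f' * christoffelT h x f' (idx 3) (idx 1)
            - christoffelT h x e (idx 3) f' * christoffelT h x f' (idx 2) (idx 1)))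

def ricciT {n : ℕ} (h : MetricField n) (x : Pt n) (b d : Fin n) : ℝ :=
  ∑ a, ∑ c, (h x)⁻¹ a c * riemannT h x ![a, b, c, d]

def ricciScalarT {n : ℕ} (h : MetricField n) (x : Pt n) : ℝ :=
  ∑ b, ∑ d, (h x)⁻¹ b d * ricciT h x b d

/-- A covector field as a rank-1 tensor field. -/
def oneForm {n : ℕ} (W : Pt n → Fin n → ℝ) : TensorField n 1 := fun x idx => W x (idx 0)

/-- Transverse covariant derivative `∇̃_b V_a` (`= V_{a||b}`). -/
def nablaT {n : ℕ} (h : MetricField n) (V : TensorField n 1) (x : Pt n) (b a : Fin n) : ℝ :=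
  covDT h V x ![b, a]

/-- Second transverse covariant derivative `∇̃_c ∇̃_b V_a`. -/
def nablaT2 {n : ℕ} (h : MetricField n) (V : TensorField n 1) (x : Pt n) (c b a : Fin n) : ℝ :=
  covDT h (covDT h V) x ![c, b, a]

/-- Transverse divergence `V^{α}{}_{||α}`. -/
def divT {n : ℕ} (h : MetricField n) (V : TensorField n 1) (x : Pt n) : ℝ :=
  ∑ b, ∑ c, (h x)⁻¹ b c * nablaT h V x b c

def gradT {n : ℕ} (f : Pt n → ℝ) : TensorField n 1 := fun x idx => pdT f (idx 0) x

/-- Transverse Laplacian. -/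
def laplaceT {n : ℕ} (h : MetricField n) (f : Pt n → ℝ) (x : Pt n) : ℝ :=
  ∑ a, ∑ b, (h x)⁻¹ a b * covDT h (gradT f) x ![a, b]

def lnSqrtDet {n : ℕ} (h : MetricField n) (y : Pt n) : ℝ :=
  Real.log (Real.sqrt (h y).det)

/-! ### Electromagnetic energy-momentum tensor -/

/-- Standard energy-momentum tensor of a `(q+1)`-form Maxwell field:
`T_{ab} = (1/q!) (F_{a c⃗} F_b{}^{c⃗} - (1/(2(q+1))) g_{ab} F_{c⃗}F^{c⃗})`. -/
def emTensor {n q : ℕ} (g : MetricField n) (F : TensorField n (q+1)) (x : Pt n)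
    (a b : Fin n) : ℝ :=
  (1 / (Nat.factorial q : ℝ)) *
    ((∑ v : Fin q → Fin n, F x (Fin.cons a v) *
        ∑ w : Fin q → Fin n, (∏ i, (g x)⁻¹ (v i) (w i)) * F x (Fin.cons b w))
     - (1 / (2 * ((q : ℝ) + 1))) * g x a b *
        ∑ v : Fin (q+1) → Fin n, F x v * raiseAll g F x v)

/-! ### Coordinate transformations (for adapted coordinates) -/

/-- Jacobian `∂ψ^a/∂y^b` of a coordinate change. -/
def jac {n : ℕ} (ψ : Pt n → Pt n) (y : Pt n) (a b : Fin n) : ℝ :=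
  pd (fun z => ψ z a) b y

/-- Pullback of the metric along the coordinate change `ψ` (from new to old coords). -/
def pullMetric {n : ℕ} (g : MetricField n) (ψ : Pt n → Pt n) : MetricField n :=
  fun y => Matrix.of fun μ ν => ∑ a, ∑ b, jac ψ y a μ * jac ψ y b ν * g (ψ y) a b

/-- Pullback of a covariant tensor field along `ψ`. -/
def pullForm {n p : ℕ} (F : TensorField n p) (ψ : Pt n → Pt n) : TensorField n p :=
  fun y idx => ∑ jdx : Fin p → Fin n, (∏ m, jac ψ y (jdx m) (idx m)) * F (ψ y) jdx

/-! ### Parallelly transported adapted frames -/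

/-- A null frame field containing `ℓ`, parallelly transported along `ℓ` and adapted
(`M^i_{jk} = 0`). -/
structure AdaptedPTFrame {n : ℕ} [NeZero n] (g : MetricField n) (ℓ : VecField n) where
  fr : ∀ x : Pt n, NullFrameAt g x
  aligned : ∀ x, (fr x).e 0 = ℓ x
  parallel : ∀ (x : Pt n) (a c : Fin n),
    (∑ b, ℓ x b * (pd (fun y => (fr y).e a c) b x
      + ∑ d, christoffel g x c b d * (fr x).e a d)) = 0
  adapted : ∀ (x : Pt n) (i j k : Fin n), 2 ≤ (i : ℕ) → 2 ≤ (j : ℕ) → 2 ≤ (k : ℕ) →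
    (∑ a, ∑ b, covD g (lowerField g fun z => (fr z).e j) x ![b, a]
      * (fr x).e i a * (fr x).e k b) = 0

/-! ### Explicit Petrov type III solutions -/

/-- The type III vacuum metric of Petrov,
`ds² = 2 du (dr + ½(xr − x eˣ) du) + eˣ(dx² + e^{2u} dy²)`, in coordinates
`(u,r,x,y)`. -/
def petrovG : MetricField 4 := fun z => Matrix.of fun a b =>
  if a = 0 ∧ b = 0 then z 2 * z 1 - z 2 * Real.exp (z 2)
  else if (a = 0 ∧ b = 1) ∨ (a = 1 ∧ b = 0) then 1
  else if a = 2 ∧ b = 2 then Real.exp (z 2)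
  else if a = 3 ∧ b = 3 then Real.exp (z 2 + 2 * z 0)
  else 0

/-- The same metric with the electromagnetic backreaction term
`−2κ₀ eˣ c(u)²` included in `2H`. -/
def petrovEM (κ₀ : ℝ) (c : ℝ → ℝ) : MetricField 4 := fun z => Matrix.of fun a b =>
  if a = 0 ∧ b = 0 then z 2 * z 1 - z 2 * Real.exp (z 2) - 2 * κ₀ * Real.exp (z 2) * (c (z 0))^2
  else if (a = 0 ∧ b = 1) ∨ (a = 1 ∧ b = 0) then 1
  else if a = 2 ∧ b = 2 then Real.exp (z 2)
  else if a = 3 ∧ b = 3 then Real.exp (z 2 + 2 * z 0)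
  else 0

/-- The null direction `ℓ = ∂_r`. -/
def ellR : VecField 4 := fun _ a => if a = 1 then 1 else 0

/-- The transverse covector of the VSI Maxwell field (4). -/
def petrovA (c : ℝ → ℝ) (z : Pt 4) : Fin 4 → ℝ := fun a =>
  if a = 2 then -(Real.exp (z 2 / 2) * c (z 0) * Real.cos (z 3 * Real.exp (z 0) / 2))
  else if a = 3 then Real.exp (z 2 / 2) * c (z 0) * Real.exp (z 0) * Real.sin (z 3 * Real.exp (z 0) / 2)
  else 0

/-- The Maxwell 2-form
`F = e^{x/2} c(u) du ∧ (−cos(y eᵘ/2) dx + eᵘ sin(y eᵘ/2) dy)`. -/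
def petrovF (c : ℝ → ℝ) : TensorField 4 2 := fun z idx =>
  (if idx 0 = 0 then petrovA c z (idx 1) else 0)
  - (if idx 1 = 0 then petrovA c z (idx 0) else 0)



/-- Partial derivative of a function with values in a normed algebra. -/
def dA {n : ℕ} {A : Type*} [NormedCommRing A] [NormedAlgebra ℝ A] (f : Pt n → A) (a : Fin n)
    (x : Pt n) : A := fderiv ℝ f x (Pi.single a 1)

section calculus
variable {n : ℕ} {A : Type*} [NormedCommRing A] [NormedAlgebra ℝ A]

theorem pd_eq_dA (f : Pt n → ℝ) (a : Fin n) (x : Pt n) : pd f a x = dA f a x := rfl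

theorem dA_const (k : A) (a : Fin n) (x : Pt n) : dA (fun _ => k) a x = 0 := by
  simp [dA]

theorem dA_add {f g : Pt n → A} {a : Fin n} {x : Pt n} (hf : DifferentiableAt ℝ f x)
    (hg : DifferentiableAt ℝ g x) : dA (fun z => f z + g z) a x = dA f a x + dA g a x := by
  unfold dA
  rw [show (fun z => f z + g z) = f + g from rfl, fderiv_add hf hg]; rfl

theorem dA_sub {f g : Pt n → A} {a : Fin n} {x : Pt n} (hf : DifferentiableAt ℝ f x)
    (hg : DifferentiableAt ℝ g x) : dA (fun z => f z - g z) a x = dA f a x - dA g a x := by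
  unfold dA
  rw [show (fun z => f z - g z) = f - g from rfl, fderiv_sub hf hg]; rfl

theorem dA_neg {f : Pt n → A} {a : Fin n} {x : Pt n} :
    dA (fun z => - f z) a x = - dA f a x := by
  unfold dA
  rw [show (fun z => - f z) = - f from rfl, fderiv_neg]; rfl

theorem dA_mul {f g : Pt n → A} {a : Fin n} {x : Pt n} (hf : DifferentiableAt ℝ f x)
    (hg : DifferentiableAt ℝ g x) :
    dA (fun z => f z * g z) a x = dA f a x * g x + f x * dA g a x := by
  unfold dA
  rw [show (fun z => f z * g z) = f * g from rfl, fderiv_mul hf hg]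
  simp; ring

theorem dA_const_mul {f : Pt n → ℝ} {k : ℝ} {a : Fin n} {x : Pt n} :
    dA (fun z => k * f z) a x = k * dA f a x := by
  unfold dA
  rw [show (fun z => k * f z) = k • f from rfl, fderiv_const_smul_field]
  simp

theorem dA_pow {f : Pt n → A} {k : ℕ} {a : Fin n} {x : Pt n} (hf : DifferentiableAt ℝ f x) :
    dA (fun z => f z ^ (k+1)) a x = (k+1) * f x ^ k * dA f a x := by
  unfold dA
  rw [show (fun z => f z ^ (k+1)) = f ^ (k+1) from rfl, fderiv_pow _ hf]
  simp

theorem dA_sq {f : Pt n → A} {a : Fin n} {x : Pt n} (hf : DifferentiableAt ℝ f x) :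
    dA (fun z => f z ^ 2) a x = 2 * f x * dA f a x := by
  rw [dA_pow hf]; norm_num

theorem dA_div_const {f : Pt n → ℝ} {k : ℝ} {a : Fin n} {x : Pt n} :
    dA (fun z => f z / k) a x = dA f a x / k := by
  simp only [div_eq_mul_inv, mul_comm _ k⁻¹]
  exact dA_const_mul

theorem dA_coord (i a : Fin n) (x : Pt n) :
    dA (fun z : Pt n => z i) a x = if i = a then 1 else 0 := by
  unfold dA
  have : HasFDerivAt (fun z : Pt n => z i) (ContinuousLinearMap.proj (R := ℝ) (φ := fun _ : Fin n => ℝ) i) x :=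
    hasFDerivAt_apply i x
  rw [this.fderiv]
  simp [Pi.single_apply]

theorem dA_comp {φ : ℝ → A} {f : Pt n → ℝ} {a : Fin n} {x : Pt n}
    (hφ : DifferentiableAt ℝ φ (f x)) (hf : DifferentiableAt ℝ f x) :
    dA (fun z => φ (f z)) a x = dA f a x • deriv φ (f x) := by
  unfold dA
  have := (hφ.hasDerivAt.hasFDerivAt).comp x hf.hasFDerivAt
  rw [show (fun z => φ (f z)) = φ ∘ f from rfl, this.fderiv]
  simp

theorem dA_exp {f : Pt n → ℝ} {a : Fin n} {x : Pt n} (hf : DifferentiableAt ℝ f x) :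
    dA (fun z => Real.exp (f z)) a x = dA f a x * Real.exp (f x) := by
  rw [dA_comp Real.differentiableAt_exp hf]; simp

theorem dA_cos {f : Pt n → ℝ} {a : Fin n} {x : Pt n} (hf : DifferentiableAt ℝ f x) :
    dA (fun z => Real.cos (f z)) a x = - (dA f a x * Real.sin (f x)) := by
  rw [dA_comp Real.differentiableAt_cos hf]; simp

theorem dA_sin {f : Pt n → ℝ} {a : Fin n} {x : Pt n} (hf : DifferentiableAt ℝ f x) :
    dA (fun z => Real.sin (f z)) a x = dA f a x * Real.cos (f x) := by
  rw [dA_comp Real.differentiableAt_sin hf]; simp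

theorem dA_fun {c : ℝ → ℝ} (hc : Differentiable ℝ c) (i a : Fin n) (x : Pt n) :
    dA (fun z : Pt n => c (z i)) a x = (if i = a then 1 else 0) * deriv c (x i) := by
  rw [dA_comp (f := fun z : Pt n => z i) (hc _) (by fun_prop), dA_coord]; simp

theorem dA_ofReal {f : Pt n → ℝ} {a : Fin n} {x : Pt n} (hf : DifferentiableAt ℝ f x) :
    dA (fun z => (f z : ℂ)) a x = ((dA f a x : ℝ) : ℂ) := by
  unfold dA
  have := (Complex.ofRealCLM.hasFDerivAt (x := f x)).comp x hf.hasFDerivAt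
  rw [show (fun z => (f z : ℂ)) = Complex.ofRealCLM ∘ f from rfl, this.fderiv]
  simp

theorem dA_cexp {f : Pt n → ℂ} {a : Fin n} {x : Pt n} (hf : DifferentiableAt ℝ f x) :
    dA (fun z => Complex.exp (f z)) a x = dA f a x * Complex.exp (f x) := by
  unfold dA
  rw [(hf.hasFDerivAt.cexp).fderiv]
  simp; ring

theorem dA_re {f : Pt n → ℂ} {a : Fin n} {x : Pt n} (hf : DifferentiableAt ℝ f x) :
    dA (fun z => (f z).re) a x = (dA f a x).re := by
  unfold dA
  have := (Complex.reCLM.hasFDerivAt (x := f x)).comp x hf.hasFDerivAt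
  rw [show (fun z => (f z).re) = Complex.reCLM ∘ f from rfl, this.fderiv]
  simp

end calculus

/-- The function `g_uu` -/
def QQ (κ₀ : ℝ) (c : ℝ → ℝ) (z : Pt 4) : ℝ :=
  z 2 * z 1 - z 2 * Real.exp (z 2) - 2 * κ₀ * Real.exp (z 2) * (c (z 0))^2

/-- Inverse metric. -/
def ginv (κ₀ : ℝ) (c : ℝ → ℝ) (z : Pt 4) : Matrix (Fin 4) (Fin 4) ℝ :=
  !![0, 1, 0, 0;
     1, -QQ κ₀ c z, 0, 0;
     0, 0, (Real.exp (z 2))⁻¹, 0;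
     0, 0, 0, (Real.exp (z 2 + 2 * z 0))⁻¹]

theorem petrovEM_eq (κ₀ : ℝ) (c : ℝ → ℝ) (z : Pt 4) : petrovEM κ₀ c z =
    !![QQ κ₀ c z, 1, 0, 0;
     1, 0, 0, 0;
     0, 0, Real.exp (z 2), 0;
     0, 0, 0, Real.exp (z 2 + 2 * z 0)] := by
  ext a b
  fin_cases a <;> fin_cases b <;> simp [petrovEM, QQ]

theorem petrovEM_inv (κ₀ : ℝ) (c : ℝ → ℝ) (z : Pt 4) : (petrovEM κ₀ c z)⁻¹ = ginv κ₀ c z := by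
  apply Matrix.inv_eq_right_inv
  rw [petrovEM_eq, ginv]
  ext a b
  fin_cases a <;> fin_cases b <;> simp [Matrix.mul_apply, Fin.sum_univ_four]

theorem forall4 {P : Fin 4 → Prop} (h0 : P 0) (h1 : P 1) (h2 : P 2) (h3 : P 3) : ∀ a, P a := by
  intro a
  fin_cases a
  exacts [h0, h1, h2, h3]

/-- Derivatives of the metric: components `∂_d g_{ab}`. -/
def DG (κ₀ : ℝ) (c : ℝ → ℝ) (z : Pt 4) : Fin 4 → Matrix (Fin 4) (Fin 4) ℝ
  | 0 => !![-(4 * κ₀ * Real.exp (z 2) * c (z 0) * deriv c (z 0)), 0, 0, 0;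
       0, 0, 0, 0; 0, 0, 0, 0; 0, 0, 0, 2 * Real.exp (z 2 + 2 * z 0)]
  | 1 => !![z 2, 0, 0, 0; 0, 0, 0, 0; 0, 0, 0, 0; 0, 0, 0, 0]
  | 2 => !![z 1 - Real.exp (z 2) - z 2 * Real.exp (z 2) - 2 * κ₀ * Real.exp (z 2) * (c (z 0))^2, 0, 0, 0;
       0, 0, 0, 0; 0, 0, Real.exp (z 2), 0; 0, 0, 0, Real.exp (z 2 + 2 * z 0)]
  | 3 => !![0, 0, 0, 0; 0, 0, 0, 0; 0, 0, 0, 0; 0, 0, 0, 0]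

/-- Christoffel symbols. -/
def Gam (κ₀ : ℝ) (c : ℝ → ℝ) (z : Pt 4) : Fin 4 → Matrix (Fin 4) (Fin 4) ℝ
  | 0 => !![-(z 2 / 2), 0, 0, 0;
       0, 0, 0, 0;
       0, 0, 0, 0;
       0, 0, 0, 0]
  | 1 => !![-(2 * κ₀ * Real.exp (z 2) * c (z 0) * deriv c (z 0)) +
        (z 2 * z 1 - z 2 * Real.exp (z 2) - 2 * κ₀ * Real.exp (z 2) * (c (z 0))^2) * z 2 / 2,
          z 2 / 2, (z 1 - Real.exp (z 2) - z 2 * Real.exp (z 2)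
            - 2 * κ₀ * Real.exp (z 2) * (c (z 0))^2) / 2, 0;
       z 2 / 2, 0, 0, 0;
       (z 1 - Real.exp (z 2) - z 2 * Real.exp (z 2)
            - 2 * κ₀ * Real.exp (z 2) * (c (z 0))^2) / 2, 0, 0, 0;
       0, 0, 0, -Real.exp (z 2 + 2 * z 0)]
  | 2 => !![-(z 1 * Real.exp (-z 2) - 1 - z 2 - 2 * κ₀ * (c (z 0))^2) / 2, 0, 0, 0;
       0, 0, 0, 0;
       0, 0, 1/2, 0;
       0, 0, 0, -(Real.exp (2 * z 0)) / 2]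
  | 3 => !![0, 0, 0, 1;
       0, 0, 0, 0;
       0, 0, 0, 1/2;
       1, 0, 1/2, 0]

set_option maxHeartbeats 2000000 in
theorem pd_petrovEM (κ₀ : ℝ) (c : ℝ → ℝ) (hc : Differentiable ℝ c) (x : Pt 4) (a b d : Fin 4) :
    pd (fun y => petrovEM κ₀ c y a b) d x = DG κ₀ c x d a b := by
  simp only [petrovEM_eq, pd_eq_dA]
  revert a b d
  refine forall4 (forall4 ?_ ?_ ?_ ?_) (forall4 ?_ ?_ ?_ ?_) (forall4 ?_ ?_ ?_ ?_)
    (forall4 ?_ ?_ ?_ ?_) <;> refine forall4 ?_ ?_ ?_ ?_ <;>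
  simp (disch := fun_prop) [DG, QQ, dA_const, dA_sub, dA_mul, dA_sq, dA_exp, dA_coord,
    dA_add, dA_fun hc] <;> ring

set_option maxHeartbeats 2000000 in
theorem christoffel_petrov (κ₀ : ℝ) (c : ℝ → ℝ) (hc : Differentiable ℝ c) :
    christoffel (petrovEM κ₀ c) = fun x a b d => Gam κ₀ c x a b d := by
  funext x a b d
  unfold christoffel
  rw [petrovEM_inv]
  simp only [pd_petrovEM κ₀ c hc, Fin.sum_univ_four]
  revert a b d
  refine forall4 (forall4 ?_ ?_ ?_ ?_) (forall4 ?_ ?_ ?_ ?_) (forall4 ?_ ?_ ?_ ?_)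
    (forall4 ?_ ?_ ?_ ?_) <;> refine forall4 ?_ ?_ ?_ ?_ <;>
  simp [ginv, Gam, DG, QQ, Real.exp_neg, Real.exp_add] <;> (try field_simp) <;> (try ring)



/-- Derivatives of the Christoffel symbols: `DGam a e b d = ∂_a Γ^e_{bd}`. -/
def DGam (κ₀ : ℝ) (c : ℝ → ℝ) (z : Pt 4) : Fin 4 → Fin 4 → Matrix (Fin 4) (Fin 4) ℝ
  | 0, 0 => !![0, 0, 0, 0; 0, 0, 0, 0; 0, 0, 0, 0; 0, 0, 0, 0]
  | 0, 1 => !![pd (fun y => Gam κ₀ c y 1 0 0) 0 z, 0,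
        -(2 * κ₀ * Real.exp (z 2) * c (z 0) * deriv c (z 0)), 0;
      0, 0, 0, 0;
      -(2 * κ₀ * Real.exp (z 2) * c (z 0) * deriv c (z 0)), 0, 0, 0;
      0, 0, 0, -(2 * Real.exp (z 2 + 2 * z 0))]
  | 0, 2 => !![2 * κ₀ * c (z 0) * deriv c (z 0), 0, 0, 0; 0, 0, 0, 0; 0, 0, 0, 0;
      0, 0, 0, -Real.exp (2 * z 0)]
  | 0, 3 => !![0, 0, 0, 0; 0, 0, 0, 0; 0, 0, 0, 0; 0, 0, 0, 0]
  | 1, 0 => !![0, 0, 0, 0; 0, 0, 0, 0; 0, 0, 0, 0; 0, 0, 0, 0]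
  | 1, 1 => !![z 2 * z 2 / 2, 0, 1/2, 0; 0, 0, 0, 0; 1/2, 0, 0, 0; 0, 0, 0, 0]
  | 1, 2 => !![-Real.exp (-z 2) / 2, 0, 0, 0; 0, 0, 0, 0; 0, 0, 0, 0; 0, 0, 0, 0]
  | 1, 3 => !![0, 0, 0, 0; 0, 0, 0, 0; 0, 0, 0, 0; 0, 0, 0, 0]
  | 2, 0 => !![-1/2, 0, 0, 0; 0, 0, 0, 0; 0, 0, 0, 0; 0, 0, 0, 0]
  | 2, 1 => !![-(2 * κ₀ * Real.exp (z 2) * c (z 0) * deriv c (z 0)) +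
        (z 1 - Real.exp (z 2) - z 2 * Real.exp (z 2) - 2 * κ₀ * Real.exp (z 2) * (c (z 0))^2) * z 2 / 2
        + (z 2 * z 1 - z 2 * Real.exp (z 2) - 2 * κ₀ * Real.exp (z 2) * (c (z 0))^2) / 2, 1/2,
        (-(2 * Real.exp (z 2)) - z 2 * Real.exp (z 2) - 2 * κ₀ * Real.exp (z 2) * (c (z 0))^2) / 2, 0;
      1/2, 0, 0, 0;
      (-(2 * Real.exp (z 2)) - z 2 * Real.exp (z 2) - 2 * κ₀ * Real.exp (z 2) * (c (z 0))^2) / 2, 0, 0, 0;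
      0, 0, 0, -Real.exp (z 2 + 2 * z 0)]
  | 2, 2 => !![(z 1 * Real.exp (-z 2) + 1) / 2, 0, 0, 0; 0, 0, 0, 0; 0, 0, 0, 0; 0, 0, 0, 0]
  | 2, 3 => !![0, 0, 0, 0; 0, 0, 0, 0; 0, 0, 0, 0; 0, 0, 0, 0]
  | 3, 0 => !![0, 0, 0, 0; 0, 0, 0, 0; 0, 0, 0, 0; 0, 0, 0, 0]
  | 3, 1 => !![0, 0, 0, 0; 0, 0, 0, 0; 0, 0, 0, 0; 0, 0, 0, 0]
  | 3, 2 => !![0, 0, 0, 0; 0, 0, 0, 0; 0, 0, 0, 0; 0, 0, 0, 0]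
  | 3, 3 => !![0, 0, 0, 0; 0, 0, 0, 0; 0, 0, 0, 0; 0, 0, 0, 0]

set_option maxHeartbeats 4000000 in
theorem pd_Gam (κ₀ : ℝ) (c : ℝ → ℝ) (hc : Differentiable ℝ c) (hc' : Differentiable ℝ (deriv c))
    (x : Pt 4) (a e b d : Fin 4) :
    pd (fun y => Gam κ₀ c y e b d) a x = DGam κ₀ c x a e b d := by
  revert e b d a
  refine forall4 ?_ ?_ ?_ ?_ <;> refine forall4 ?_ ?_ ?_ ?_ <;> refine forall4 ?_ ?_ ?_ ?_ <;>
    refine forall4 ?_ ?_ ?_ ?_ <;>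
  (try simp only [DGam, Matrix.of_apply, Matrix.cons_val, Gam]) <;>
  simp (disch := fun_prop) only [pd_eq_dA, dA_const, dA_sub, dA_mul, dA_sq, dA_exp, dA_coord,
    dA_add, dA_neg, dA_div_const, dA_fun hc, dA_fun hc', Fin.reduceEq, ↓reduceIte] <;> ring

set_option maxHeartbeats 4000000 in
theorem ricci_petrov (κ₀ : ℝ) (c : ℝ → ℝ) (hc : Differentiable ℝ c) (hc' : Differentiable ℝ (deriv c))
    (x : Pt 4) (a b : Fin 4) :
    ricci (petrovEM κ₀ c) x a b = if a = 0 ∧ b = 0 then κ₀ * c (x 0) ^ 2 else 0 := by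
  unfold ricci riemann
  simp only [petrovEM_inv, christoffel_petrov κ₀ c hc, pd_Gam κ₀ c hc hc']
  revert a b
  refine forall4 ?_ ?_ ?_ ?_ <;> refine forall4 ?_ ?_ ?_ ?_ <;> 
  simp only [Fin.sum_univ_four, ginv, petrovEM_eq, Matrix.of_apply, Matrix.cons_val, zero_mul,
    add_zero, zero_add, one_mul, DGam, Gam, mul_zero, sub_zero, zero_sub, mul_one, neg_zero] <;>
  simp [Real.exp_neg, Real.exp_add] <;> (try field_simp) <;> (try simp only [QQ]) <;> (try ring)



/-- Boost weight of a coordinate index. -/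
def wt : Fin 4 → ℤ
  | 0 => -1
  | 1 => 1
  | 2 => 0
  | 3 => 0

set_option maxHeartbeats 8000000 in
theorem riemann_aux (κ₀ : ℝ) (c : ℝ → ℝ) (x : Pt 4) (i j k l : Fin 4)
    (h : 0 ≤ wt i + wt j + wt k + wt l) (hkl : k < l) :
    ∑ e, petrovEM κ₀ c x i e *
    (DGam κ₀ c x k e l j - DGam κ₀ c x l e k j
     + ∑ f', (Gam κ₀ c x e k f' * Gam κ₀ c x f' l j
            - Gam κ₀ c x e l f' * Gam κ₀ c x f' k j)) = 0 := by
  rw [petrovEM_eq]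
  revert h hkl
  revert l k
  refine forall4 (forall4 ?_ ?_ ?_ ?_) (forall4 ?_ ?_ ?_ ?_) (forall4 ?_ ?_ ?_ ?_)
    (forall4 ?_ ?_ ?_ ?_) <;> intro h hkl <;>
  first
  | exact absurd hkl (by decide)
  | (clear hkl
     revert h
     revert j i
     refine forall4 ?_ ?_ ?_ ?_ <;> refine forall4 ?_ ?_ ?_ ?_ <;> intro h <;>
     first
     | exact absurd h (by decide)
     | (simp only [Fin.sum_univ_four, Matrix.of_apply, Matrix.cons_val, zero_mul,
          add_zero, zero_add, one_mul, DGam, Gam, mul_zero, sub_zero, zero_sub, mul_one, neg_zero]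
        try ring_nf))

theorem riemann_bw (κ₀ : ℝ) (c : ℝ → ℝ) (hc : Differentiable ℝ c) (hc' : Differentiable ℝ (deriv c))
    (x : Pt 4) (idx : Fin 4 → Fin 4)
    (h : 0 ≤ wt (idx 0) + wt (idx 1) + wt (idx 2) + wt (idx 3)) :
    riemann (petrovEM κ₀ c) x idx = 0 := by
  unfold riemann
  simp only [christoffel_petrov κ₀ c hc, pd_Gam κ₀ c hc hc']
  rcases lt_trichotomy (idx 2) (idx 3) with hl | hl | hl
  · exact riemann_aux κ₀ c x _ _ _ _ h hl
  · simp [hl]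
  · have := riemann_aux κ₀ c x (idx 0) (idx 1) (idx 3) (idx 2) (by linarith) hl
    rw [← neg_eq_zero, ← Finset.sum_neg_distrib, ← this]
    refine Finset.sum_congr rfl fun e _ => ?_
    simp only [Finset.sum_sub_distrib]
    ring

theorem ricciScalar_petrov (κ₀ : ℝ) (c : ℝ → ℝ) (hc : Differentiable ℝ c)
    (hc' : Differentiable ℝ (deriv c)) (x : Pt 4) : ricciScalar (petrovEM κ₀ c) x = 0 := by
  unfold ricciScalar
  simp [ricci_petrov κ₀ c hc hc', petrovEM_inv, Fin.sum_univ_four, ginv]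

theorem petrov_wt (κ₀ : ℝ) (c : ℝ → ℝ) (x : Pt 4) (i j : Fin 4) (h : 0 < wt i + wt j) :
    petrovEM κ₀ c x i j = 0 := by
  rw [petrovEM_eq]
  revert h
  revert i j
  refine forall4 ?_ ?_ ?_ ?_ <;> refine forall4 ?_ ?_ ?_ ?_ <;> intro h <;>
  first
  | exact absurd h (by decide)
  | simp

theorem ginv_wt (κ₀ : ℝ) (c : ℝ → ℝ) (x : Pt 4) (i j : Fin 4) (h : wt i + wt j < 0) :
    ginv κ₀ c x i j = 0 := by
  unfold ginv
  revert h
  revert i j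
  refine forall4 ?_ ?_ ?_ ?_ <;> refine forall4 ?_ ?_ ?_ ?_ <;> intro h <;>
  first
  | exact absurd h (by decide)
  | simp

theorem ricci_wt (κ₀ : ℝ) (c : ℝ → ℝ) (hc : Differentiable ℝ c) (hc' : Differentiable ℝ (deriv c))
    (x : Pt 4) (i j : Fin 4) (h : -2 < wt i + wt j) : ricci (petrovEM κ₀ c) x i j = 0 := by
  rw [ricci_petrov κ₀ c hc hc', if_neg]
  rintro ⟨rfl, rfl⟩
  exact absurd h (by decide)

theorem weyl_bw (κ₀ : ℝ) (c : ℝ → ℝ) (hc : Differentiable ℝ c) (hc' : Differentiable ℝ (deriv c))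
    (x : Pt 4) (idx : Fin 4 → Fin 4)
    (h : 0 ≤ wt (idx 0) + wt (idx 1) + wt (idx 2) + wt (idx 3)) :
    weyl (petrovEM κ₀ c) x idx = 0 := by
  have key : ∀ i j k l : Fin 4, 0 ≤ wt i + wt j + wt k + wt l →
      petrovEM κ₀ c x i j * ricci (petrovEM κ₀ c) x k l = 0 := by
    intro i j k l h
    by_cases h1 : 0 < wt i + wt j
    · rw [petrov_wt _ _ _ _ _ h1, zero_mul]
    · rw [ricci_wt κ₀ c hc hc' _ _ _ (by linarith), mul_zero]
  unfold weyl
  rw [riemann_bw κ₀ c hc hc' x idx h, ricciScalar_petrov κ₀ c hc hc',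
    key _ _ _ _ (by linarith), key _ _ _ _ (by linarith), key _ _ _ _ (by linarith),
    key _ _ _ _ (by linarith)]
  simp

theorem bw_eq_sum {k : ℕ} (a : Fin k → Fin 4) : bw a = ∑ m, - wt (a m) := by
  unfold bw
  rw [Finset.card_filter, Finset.card_filter]
  push_cast
  rw [← Finset.sum_sub_distrib]
  refine Finset.sum_congr rfl fun m _ => ?_
  generalize a m = i
  revert i
  refine forall4 ?_ ?_ ?_ ?_ <;> decide

theorem weyl_boost (κ₀ : ℝ) (c : ℝ → ℝ) (hc : Differentiable ℝ c)
    (hc' : Differentiable ℝ (deriv c)) :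
    BoostOrderLE (petrovEM κ₀ c) ellR (weyl (petrovEM κ₀ c)) (-1) := by
  intro x fr h0 a ha
  unfold frameComp
  have hg : ∀ Y : Fin 4 → ℝ, gdot (petrovEM κ₀ c) x (fr.e 0) Y = Y 0 := by
    intro Y
    rw [h0]
    simp [gdot, petrovEM_eq, ellR, Fin.sum_univ_four]
  have hi : ∀ i : Fin 4, 2 ≤ (i : ℕ) → fr.e i 0 = 0 := fun i hi => by
    rw [← hg (fr.e i)]; exact fr.h0i i hi
  have hfw : ∀ i j : Fin 4, fr.e i j ≠ 0 → - wt i ≤ wt j := by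
    refine forall4 ?_ ?_ ?_ ?_
    · rw [h0]
      refine forall4 ?_ ?_ ?_ ?_ <;> intro h <;>
      first
      | decide
      | exact absurd (by simp [ellR]) h
    · refine forall4 ?_ ?_ ?_ ?_ <;> intro _ <;> decide
    · refine forall4 ?_ ?_ ?_ ?_ <;> intro h <;>
      first
      | exact absurd (hi 2 (by decide)) h
      | decide
    · refine forall4 ?_ ?_ ?_ ?_ <;> intro h <;>
      first
      | exact absurd (hi 3 (by decide)) h
      | decide
  refine Finset.sum_eq_zero fun idx _ => ?_
  by_cases hz : ∏ m, fr.e (a m) (idx m) = 0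
  · rw [hz, mul_zero]
  · rw [← ne_eq, Finset.prod_ne_zero_iff] at hz
    have : ∑ m, - wt (a m) ≤ ∑ m, wt (idx m) :=
      Finset.sum_le_sum fun m hm => hfw _ _ (hz m hm)
    rw [← bw_eq_sum, Fin.sum_univ_four] at this
    rw [weyl_bw κ₀ c hc hc' x idx (by linarith), zero_mul]



theorem sum_fin1 {M : Type*} [AddCommMonoid M] (f : (Fin 1 → Fin 4) → M) :
    ∑ v, f v = ∑ a, f ![a] := by
  refine Fintype.sum_equiv (Equiv.funUnique (Fin 1) (Fin 4)) _ _ fun v => ?_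
  congr 1
  ext i
  fin_cases i
  rfl

theorem sum_fin2 {M : Type*} [AddCommMonoid M] (f : (Fin 2 → Fin 4) → M) :
    ∑ v, f v = ∑ a, ∑ b, f ![a, b] := by
  rw [← Fintype.sum_prod_type']
  refine Fintype.sum_equiv (finTwoArrowEquiv (Fin 4)) _ _ fun v => ?_
  congr 1
  ext i
  fin_cases i <;> rfl

theorem petrovF_eq (c : ℝ → ℝ) (z : Pt 4) (idx : Fin 2 → Fin 4) : petrovF c z idx =
    !![0, 0, petrovA c z 2, petrovA c z 3;
     0, 0, 0, 0;
     -petrovA c z 2, 0, 0, 0;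
     -petrovA c z 3, 0, 0, 0] (idx 0) (idx 1) := by
  unfold petrovF
  generalize idx 0 = i
  generalize idx 1 = j
  have h0 : petrovA c z 0 = 0 := by simp [petrovA]
  have h1 : petrovA c z 1 = 0 := by simp [petrovA]
  revert i j
  refine forall4 ?_ ?_ ?_ ?_ <;> refine forall4 ?_ ?_ ?_ ?_ <;> simp [h0, h1]

theorem raise_petrovF (κ₀ : ℝ) (c : ℝ → ℝ) (z : Pt 4) (idx : Fin 2 → Fin 4) :
    raiseAll (petrovEM κ₀ c) (petrovF c) z idx =
    !![0, 0, 0, 0;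
     0, 0, (Real.exp (z 2))⁻¹ * petrovA c z 2, (Real.exp (z 2 + 2 * z 0))⁻¹ * petrovA c z 3;
     0, -((Real.exp (z 2))⁻¹ * petrovA c z 2), 0, 0;
     0, -((Real.exp (z 2 + 2 * z 0))⁻¹ * petrovA c z 3), 0, 0] (idx 0) (idx 1) := by
  unfold raiseAll
  simp only [petrovEM_inv, sum_fin2, petrovF_eq, Fin.prod_univ_two, Matrix.cons_val]
  generalize idx 0 = i
  generalize idx 1 = j
  revert i j
  refine forall4 ?_ ?_ ?_ ?_ <;> refine forall4 ?_ ?_ ?_ ?_ <;>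
    simp [ginv, Fin.sum_univ_four]

theorem petrovA_sq (c : ℝ → ℝ) (z : Pt 4) :
    (Real.exp (z 2))⁻¹ * petrovA c z 2 ^ 2 + (Real.exp (z 2 + 2 * z 0))⁻¹ * petrovA c z 3 ^ 2
      = c (z 0) ^ 2 := by
  have h1 : Real.exp (z 2) = Real.exp (z 2 / 2) ^ 2 := by
    rw [← Real.exp_nat_mul]; congr 1; push_cast; ring
  have h2 : Real.exp (2 * z 0) = Real.exp (z 0) ^ 2 := by
    rw [← Real.exp_nat_mul]; congr 1
  have h3 := Real.cos_sq_add_sin_sq (z 3 * Real.exp (z 0) / 2)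
  simp only [petrovA, Real.exp_add, h1, h2]
  simp
  field_simp
  rw [h3, mul_one]

theorem F_sq (κ₀ : ℝ) (c : ℝ → ℝ) (x : Pt 4) :
    ∑ v : Fin 2 → Fin 4, petrovF c x v * raiseAll (petrovEM κ₀ c) (petrovF c) x v = 0 := by
  simp only [sum_fin2, petrovF_eq, raise_petrovF, Matrix.cons_val, Fin.sum_univ_four,
    Matrix.of_apply]
  simp

theorem em_petrov (κ₀ : ℝ) (c : ℝ → ℝ) (x : Pt 4) (a b : Fin 4) :
    emTensor (petrovEM κ₀ c) (petrovF c) x a b = if a = 0 ∧ b = 0 then c (x 0) ^ 2 else 0 := by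
  unfold emTensor
  rw [← petrovA_sq c x]
  have h : ∑ v : Fin (1+1) → Fin 4, petrovF c x v * raiseAll (petrovEM κ₀ c) (petrovF c) x v = 0 :=
    F_sq κ₀ c x
  rw [h]
  simp only [petrovEM_inv, sum_fin2, sum_fin1, petrovF_eq, raise_petrovF, Fin.prod_univ_one,
    Matrix.cons_val, Fin.cons_zero, Fin.cons_one, Fin.isValue]
  revert a b
  refine forall4 ?_ ?_ ?_ ?_ <;> refine forall4 ?_ ?_ ?_ ?_ <;>
    simp [ginv, Fin.sum_univ_four, petrovEM_eq] <;> ring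

theorem einstein_petrov (κ₀ : ℝ) (c : ℝ → ℝ) (hc : Differentiable ℝ c)
    (hc' : Differentiable ℝ (deriv c)) (x : Pt 4) (a b : Fin 4) :
    ricci (petrovEM κ₀ c) x a b
        - (1/2) * ricciScalar (petrovEM κ₀ c) x * (petrovEM κ₀ c) x a b
        = κ₀ * emTensor (petrovEM κ₀ c) (petrovF c) x a b := by
  rw [ricci_petrov κ₀ c hc hc', ricciScalar_petrov κ₀ c hc hc', em_petrov]
  split_ifs <;> simp



/-- The 2-form `du ∧ (B₂ dx + B₃ dy)`. -/
def duB (B2 B3 : Pt 4 → ℝ) : TensorField 4 2 := fun z idx =>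
  !![0, 0, B2 z, B3 z;
     0, 0, 0, 0;
     -B2 z, 0, 0, 0;
     -B3 z, 0, 0, 0] (idx 0) (idx 1)

theorem extD_two (F : TensorField 4 2) (x : Pt 4) (idx : Fin 3 → Fin 4) :
    extD F x idx = pd (fun y => F y ![idx 1, idx 2]) (idx 0) x
      - pd (fun y => F y ![idx 0, idx 2]) (idx 1) x
      + pd (fun y => F y ![idx 0, idx 1]) (idx 2) x := by
  unfold extD
  rw [Fin.sum_univ_three]
  have h0 : (fun i => idx ((0 : Fin 3).succAbove i)) = ![idx 1, idx 2] := by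
    ext i; fin_cases i <;> rfl
  have h1 : (fun i => idx ((1 : Fin 3).succAbove i)) = ![idx 0, idx 2] := by
    ext i; fin_cases i <;> rfl
  have h2 : (fun i => idx ((2 : Fin 3).succAbove i)) = ![idx 0, idx 1] := by
    ext i; fin_cases i <;> rfl
  rw [h0, h1, h2]
  norm_num
  ring

theorem duB_closed (B2 B3 : Pt 4 → ℝ) (x : Pt 4) (h2 : dA B2 1 x = 0) (h3 : dA B3 1 x = 0)
    (h : dA B3 2 x = dA B2 3 x) (idx : Fin 3 → Fin 4) : extD (duB B2 B3) x idx = 0 := by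
  rw [extD_two]
  simp only [pd_eq_dA, duB, Matrix.cons_val]
  generalize idx 0 = i
  generalize idx 1 = j
  generalize idx 2 = k
  revert i j k
  refine forall4 ?_ ?_ ?_ ?_ <;> refine forall4 ?_ ?_ ?_ ?_ <;> refine forall4 ?_ ?_ ?_ ?_ <;>
    simp only [Matrix.of_apply, Matrix.cons_val, dA_const, dA_neg, h2, h3, h] <;> ring

/-- Order sign of a pair. -/
def sg (a b : Fin 4) : ℤ := if a < b then 1 else if b < a then -1 else 0

/-- A computable version of the sign. -/
def psign (f : Fin 4 → Fin 4) : ℤ :=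
  ∏ i : Fin 4, ∏ j : Fin 4, if i < j then sg (f i) (f j) else 1

theorem permSign_eq (f : Fin 4 → Fin 4) : permSign f = psign f := by
  unfold permSign
  split_ifs with h
  · have key : ∀ σ : Equiv.Perm (Fin 4), (Equiv.Perm.sign σ : ℤ) = psign σ := by decide
    rw [key]
    rfl
  · have : ¬ Function.Injective f := fun hi => h (Finite.injective_iff_bijective.mp hi)
    simp only [Function.Injective, not_forall] at this
    obtain ⟨a, b, hab, hne⟩ := this
    symm
    rcases lt_or_gt_of_ne hne with hl | hl
    · refine Finset.prod_eq_zero (Finset.mem_univ a) (Finset.prod_eq_zero (Finset.mem_univ b) ?_)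
      simp [hl, hab, sg]
    · refine Finset.prod_eq_zero (Finset.mem_univ b) (Finset.prod_eq_zero (Finset.mem_univ a) ?_)
      simp [hl, hab, sg]

theorem psign_cons (a b i j : Fin 4) : psign ![a, b, i, j] =
    sg a b *
    sg a i *
    sg a j *
    (sg b i *
    sg b j) *
    sg i j := by
  simp [psign, Fin.prod_univ_four]

theorem det_petrov (κ₀ : ℝ) (c : ℝ → ℝ) (z : Pt 4) :
    Real.sqrt |(petrovEM κ₀ c z).det| = Real.exp (z 2 + z 0) := by
  rw [petrovEM_eq]
  have : !![QQ κ₀ c z, 1, 0, 0;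
     1, 0, 0, 0;
     0, 0, Real.exp (z 2), 0;
     0, 0, 0, Real.exp (z 2 + 2 * z 0)].det = -(Real.exp (z 2 + z 0))^2 := by
    simp [Matrix.det_succ_row_zero, Fin.sum_univ_succ, Fin.succAbove]
    rw [← Real.exp_add, ← Real.exp_nat_mul]
    congr 1
    push_cast
    ring
  rw [this, abs_neg, abs_of_nonneg (by positivity), Real.sqrt_sq (Real.exp_pos _).le]

theorem append_two (a : Fin 2 → Fin 4) (idx : Fin 2 → Fin 4) (h : 2 + 2 = 4) :
    (fun i => Fin.append a idx (Fin.cast h.symm i)) = ![a 0, a 1, idx 0, idx 1] := by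
  ext i; fin_cases i <;> rfl

theorem hodge_petrovF (h : 2 + 2 = 4) (κ₀ : ℝ) (c : ℝ → ℝ) :
    hodge h (petrovEM κ₀ c) (petrovF c) =
      duB (fun z => -(Real.exp (-z 0) * petrovA c z 3)) (fun z => Real.exp (z 0) * petrovA c z 2) := by
  funext z idx
  unfold hodge duB
  simp only [sum_fin2, append_two, permSign_eq, psign_cons, det_petrov, raise_petrovF,
    Matrix.cons_val]
  generalize idx 0 = i
  generalize idx 1 = j
  have e1 : Real.exp (z 2 + z 0) * (Real.exp (z 2))⁻¹ = Real.exp (z 0) := by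
    rw [← Real.exp_neg, ← Real.exp_add]; congr 1; ring
  have e2 : Real.exp (z 2 + z 0) * (Real.exp (z 2 + 2 * z 0))⁻¹ = Real.exp (- z 0) := by
    rw [← Real.exp_neg, ← Real.exp_add]; congr 1; ring
  rw [← e1, ← e2]
  revert i j
  refine forall4 ?_ ?_ ?_ ?_ <;> refine forall4 ?_ ?_ ?_ ?_ <;>
    simp [Fin.sum_univ_four, sg] <;> ring

theorem petrovF_duB (c : ℝ → ℝ) :
    petrovF c = duB (fun z => petrovA c z 2) (fun z => petrovA c z 3) := by
  funext z idx
  rw [petrovF_eq]; rfl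

theorem petrovA_two (c : ℝ → ℝ) (z : Pt 4) : petrovA c z 2 =
    -(Real.exp (z 2 / 2) * c (z 0) * Real.cos (z 3 * Real.exp (z 0) / 2)) := by simp [petrovA]

theorem petrovA_three (c : ℝ → ℝ) (z : Pt 4) : petrovA c z 3 =
    Real.exp (z 2 / 2) * c (z 0) * Real.exp (z 0) * Real.sin (z 3 * Real.exp (z 0) / 2) := by
  simp [petrovA]

theorem maxwell_petrov (h : 2 + 2 = 4) (κ₀ : ℝ) (c : ℝ → ℝ) (hc : Differentiable ℝ c) :
    MaxwellEqs h (petrovEM κ₀ c) (petrovF c) := by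
  have hcc : ∀ y : Pt 4, DifferentiableAt ℝ (fun z : Pt 4 => c (z 0)) y := fun y => by fun_prop
  constructor
  · intro x idx
    rw [petrovF_duB]
    simp only [petrovA_two, petrovA_three]
    refine duB_closed _ _ x ?_ ?_ ?_ idx
    all_goals
      simp (disch := fun_prop) [dA_neg, dA_mul, dA_exp, dA_cos, dA_sin, dA_div_const, dA_coord,
        dA_fun hc]
    all_goals try ring
  · intro x idx
    rw [hodge_petrovF]
    simp only [petrovA_two, petrovA_three]
    refine duB_closed _ _ x ?_ ?_ ?_ idx
    all_goals
      simp (disch := fun_prop) [dA_neg, dA_mul, dA_exp, dA_cos, dA_sin, dA_div_const, dA_coord,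
        dA_fun hc]
    all_goals try
      have : Real.exp (-x 0) * Real.exp (x 0) = 1 := by rw [← Real.exp_add]; simp
    · linear_combination (-(1/2) * Real.exp (x 2 / 2) * c (x 0) * Real.exp (x 0) * Real.cos (x 3 * Real.exp (x 0) / 2)) * this



/-- Smooth complex function independent of `r`. -/
def RI (a : Pt 4 → ℂ) : Prop :=
  ContDiff ℝ (⊤ : ℕ∞) a ∧ ∀ (z : Pt 4) (t : ℝ), a (z + Pi.single 1 t) = a z

theorem RI.mul {a b : Pt 4 → ℂ} (ha : RI a) (hb : RI b) : RI (fun z => a z * b z) :=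
  ⟨ha.1.mul hb.1, fun z t => by simp only [ha.2 z t, hb.2 z t]⟩

theorem RI.add {a b : Pt 4 → ℂ} (ha : RI a) (hb : RI b) : RI (fun z => a z + b z) :=
  ⟨ha.1.add hb.1, fun z t => by simp only [ha.2 z t, hb.2 z t]⟩

theorem RI.neg {a : Pt 4 → ℂ} (ha : RI a) : RI (fun z => - a z) :=
  ⟨ha.1.neg, fun z t => by simp only [ha.2 z t]⟩

theorem RI.const (k : ℂ) : RI (fun _ => k) := ⟨contDiff_const, fun _ _ => rfl⟩

theorem RI.cexp {a : Pt 4 → ℂ} (ha : RI a) : RI (fun z => Complex.exp (a z)) :=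
  ⟨ha.1.cexp, fun z t => by simp only [ha.2 z t]⟩

theorem RI.ofReal {f : Pt 4 → ℝ} (hf : ContDiff ℝ (⊤ : ℕ∞) f)
    (h : ∀ (z : Pt 4) (t : ℝ), f (z + Pi.single 1 t) = f z) : RI (fun z => (f z : ℂ)) :=
  ⟨Complex.ofRealCLM.contDiff.comp hf, fun z t => by simp only [h z t]⟩

theorem RI.diff {a : Pt 4 → ℂ} (ha : RI a) (x : Pt 4) : DifferentiableAt ℝ a x :=
  (ha.1.differentiable (by simp)) x

theorem contDiff_dA {a : Pt 4 → ℂ} (ha : ContDiff ℝ (⊤ : ℕ∞) a) (b : Fin 4) :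
    ContDiff ℝ (⊤ : ℕ∞) (dA a b) := by
  unfold dA
  have := ha.fderiv_right (m := (⊤ : ℕ∞)) (by simp)
  exact this.clm_apply contDiff_const

theorem RI.dA {a : Pt 4 → ℂ} (ha : RI a) (b : Fin 4) : RI (dA a b) := by
  refine ⟨contDiff_dA ha.1 b, fun z t => ?_⟩
  have h : (fun y => a (y + Pi.single 1 t)) = a := funext fun y => ha.2 y t
  have := fderiv_comp_add_right (𝕜 := ℝ) (f := a) (x := z) (Pi.single (1 : Fin 4) t)
  rw [h] at this
  unfold VSI.dA
  rw [← this]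

theorem RI.dA_one {a : Pt 4 → ℂ} (ha : RI a) (x : Pt 4) : VSI.dA a 1 x = 0 := by
  unfold VSI.dA
  rw [← (ha.diff x).lineDeriv_eq_fderiv]
  unfold lineDeriv
  have : (fun t : ℝ => a (x + t • Pi.single (1 : Fin 4) (1 : ℝ))) = fun _ => a x := by
    funext t
    rw [← ha.2 x t]
    congr 2
    ext i
    simp [Pi.single_apply]
  rw [this]
  simp

/-- Polynomials in `r` of degree at most `d` with smooth `r`-independent coefficients. -/
inductive Bal (d : ℤ) : (Pt 4 → ℂ) → Prop
  | zero : Bal d (fun _ => 0)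
  | mono (j : ℕ) (a : Pt 4 → ℂ) (hj : (j : ℤ) ≤ d) (ha : RI a) :
      Bal d (fun z => ((z 1 : ℝ) : ℂ) ^ j * a z)
  | add {f g : Pt 4 → ℂ} (hf : Bal d f) (hg : Bal d g) : Bal d (fun z => f z + g z)

theorem Bal.of_RI {d : ℤ} (hd : 0 ≤ d) {a : Pt 4 → ℂ} (ha : RI a) : Bal d a := by
  have := Bal.mono (d := d) 0 a (by simpa using hd) ha
  simpa using this

theorem Bal.of_eq_zero {d : ℤ} {f : Pt 4 → ℂ} (h : ∀ z, f z = 0) : Bal d f := by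
  rw [show f = fun _ => 0 from funext h]; exact Bal.zero

theorem Bal.eq_zero {d : ℤ} (hd : d < 0) {f : Pt 4 → ℂ} (hf : Bal d f) (z : Pt 4) : f z = 0 := by
  induction hf with
  | zero => rfl
  | mono j a hj ha => omega
  | add _ _ h1 h2 => simp only [h1, h2, add_zero]

theorem Bal.le {d e : ℤ} (h : d ≤ e) {f : Pt 4 → ℂ} (hf : Bal d f) : Bal e f := by
  induction hf with
  | zero => exact Bal.zero
  | mono j a hj ha => exact Bal.mono j a (hj.trans h) ha
  | add _ _ h1 h2 => exact Bal.add h1 h2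

theorem contDiff_r : ContDiff ℝ (⊤ : ℕ∞) (fun z : Pt 4 => ((z 1 : ℝ) : ℂ)) :=
  Complex.ofRealCLM.contDiff.comp (contDiff_apply ℝ ℝ 1)

theorem Bal.contDiff {d : ℤ} {f : Pt 4 → ℂ} (hf : Bal d f) : ContDiff ℝ (⊤ : ℕ∞) f := by
  induction hf with
  | zero => exact contDiff_const
  | mono j a hj ha => exact (contDiff_r.pow j).mul ha.1
  | add _ _ h1 h2 => exact h1.add h2

theorem Bal.diff {d : ℤ} {f : Pt 4 → ℂ} (hf : Bal d f) (x : Pt 4) : DifferentiableAt ℝ f x :=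
  (hf.contDiff.differentiable (by simp)) x

theorem Bal.mul {d e : ℤ} {f g : Pt 4 → ℂ} (hf : Bal d f) (hg : Bal e g) :
    Bal (d + e) (fun z => f z * g z) := by
  induction hf with
  | zero => exact Bal.of_eq_zero fun z => zero_mul _
  | mono j a hj ha =>
    induction hg with
    | zero => exact Bal.of_eq_zero fun z => mul_zero _
    | mono k b hk hb =>
      have := Bal.mono (d := d + e) (j + k) _ (by push_cast; omega) (ha.mul hb)
      convert this using 2
      ring
    | add _ _ h1 h2 =>
      convert h1.add h2 using 2
      ring
  | add _ _ h1 h2 =>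
    convert h1.add h2 using 2
    ring

theorem Bal.RI_mul {d : ℤ} {f g : Pt 4 → ℂ} (hf : RI f) (hg : Bal d g) :
    Bal d (fun z => f z * g z) := by
  have := (Bal.of_RI le_rfl hf).mul hg
  simpa using this

theorem Bal.neg {d : ℤ} {f : Pt 4 → ℂ} (hf : Bal d f) : Bal d (fun z => - f z) := by
  have := Bal.RI_mul (RI.const (-1)) hf
  simpa using this

theorem Bal.sub {d : ℤ} {f g : Pt 4 → ℂ} (hf : Bal d f) (hg : Bal d g) :
    Bal d (fun z => f z - g z) := by
  simpa [sub_eq_add_neg] using hf.add hg.neg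

theorem Bal.sum {d : ℤ} {ι : Type*} (s : Finset ι) {f : ι → Pt 4 → ℂ}
    (hf : ∀ i ∈ s, Bal d (f i)) : Bal d (fun z => ∑ i ∈ s, f i z) := by
  classical
  induction s using Finset.induction_on with
  | empty => exact Bal.of_eq_zero fun z => by simp
  | insert i s hi ih =>
    simp only [Finset.sum_insert hi]
    exact (hf i (Finset.mem_insert_self i s)).add
      (ih fun j hj => hf j (Finset.mem_insert_of_mem hj))

theorem Bal.prod {ι : Type*} (s : Finset ι) {d : ι → ℤ} {f : ι → Pt 4 → ℂ}
    (hf : ∀ i ∈ s, Bal (d i) (f i)) : Bal (∑ i ∈ s, d i) (fun z => ∏ i ∈ s, f i z) := by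
  classical
  induction s using Finset.induction_on with
  | empty => simpa using Bal.of_RI le_rfl (RI.const 1)
  | insert i s hi ih =>
    simp only [Finset.prod_insert hi, Finset.sum_insert hi]
    exact (hf i (Finset.mem_insert_self i s)).mul
      (ih fun j hj => hf j (Finset.mem_insert_of_mem hj))

theorem dA_r (b : Fin 4) (x : Pt 4) :
    dA (fun z : Pt 4 => ((z 1 : ℝ) : ℂ)) b x = if (1 : Fin 4) = b then 1 else 0 := by
  rw [dA_ofReal (f := fun z : Pt 4 => z 1) (by fun_prop), dA_coord]
  split_ifs <;> simp

theorem diff_r (x : Pt 4) : DifferentiableAt ℝ (fun z : Pt 4 => ((z 1 : ℝ) : ℂ)) x :=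
  (contDiff_r.differentiable (by simp)) x

theorem Bal.dA_wt {d : ℤ} {f : Pt 4 → ℂ} (hf : Bal d f) (b : Fin 4) :
    Bal (d - wt b) (dA f b) := by
  induction hf with
  | zero => exact Bal.of_eq_zero fun z => dA_const _ _ _
  | add hf hg h1 h2 =>
    have := h1.add h2
    convert this using 2 with z
    exact dA_add (hf.diff z) (hg.diff z)
  | mono j a hj ha =>
    have key : dA (fun z : Pt 4 => ((z 1 : ℝ) : ℂ) ^ j * a z) b = fun z =>
        dA (fun z : Pt 4 => ((z 1 : ℝ) : ℂ) ^ j) b z * a z + ((z 1 : ℝ) : ℂ) ^ j * dA a b z := by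
      funext z
      exact dA_mul ((diff_r z).pow j) (ha.diff z)
    rw [key]
    by_cases hb : b = 1
    · subst hb
      have hw : wt 1 = 1 := rfl
      rw [hw]
      simp only [ha.dA_one, mul_zero, add_zero]
      cases j with
      | zero => exact Bal.of_eq_zero fun z => by simp [dA_const]
      | succ j =>
        simp only [dA_pow (diff_r _), dA_r, if_true, mul_one]
        have := Bal.mono (d := d - 1) j _ (by push_cast at hj; omega)
          ((RI.const ((j : ℂ) + 1)).mul ha)
        convert this using 2
        ring
    · have hw : wt b ≤ 0 := by
        clear key
        revert hb
        revert b
        refine forall4 ?_ ?_ ?_ ?_ <;> decide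
      have hz : ∀ z, dA (fun z : Pt 4 => ((z 1 : ℝ) : ℂ) ^ j) b z = 0 := by
        intro z
        cases j with
        | zero => simp [dA_const]
        | succ j => simp [dA_pow (diff_r _), dA_r, Ne.symm hb]
      simp only [hz, zero_mul, zero_add]
      exact Bal.mono j _ (by omega) (ha.dA b)



theorem Bal.lin {d : ℤ} (hd : 1 ≤ d) {f p q : Pt 4 → ℝ} (hp : RI fun z => (p z : ℂ))
    (hq : RI fun z => (q z : ℂ)) (h : ∀ z, f z = z 1 * p z + q z) :
    Bal d (fun z => (f z : ℂ)) := by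
  have h1 := Bal.mono (d := d) 1 _ (by simpa using hd) hp
  have h2 := Bal.of_RI (d := d) (by omega) hq
  convert h1.add h2 using 2 with z
  rw [h]
  push_cast
  ring

set_option maxHeartbeats 4000000 in
theorem Gam_bal (κ₀ : ℝ) (c : ℝ → ℝ) (hc : ContDiff ℝ (⊤ : ℕ∞) c)
    (hc' : ContDiff ℝ (⊤ : ℕ∞) (deriv c)) (e a b : Fin 4) :
    Bal (wt e - wt a - wt b) (fun z => (Gam κ₀ c z e a b : ℂ)) := by
  revert e a b
  refine forall4 ?_ ?_ ?_ ?_ <;> refine forall4 ?_ ?_ ?_ ?_ <;> refine forall4 ?_ ?_ ?_ ?_ <;>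
  simp only [Gam, Matrix.of_apply, Matrix.cons_val] <;>
  first
  | exact Bal.of_eq_zero fun z => Complex.ofReal_zero
  | (refine Bal.of_RI (by decide) (RI.ofReal (by fun_prop) ?_)
     intro z t
     simp
     done)
  | (refine Bal.lin (p := fun z => z 2 * z 2 / 2)
      (q := fun z => -(2 * κ₀ * Real.exp (z 2) * c (z 0) * deriv c (z 0)) +
        (- z 2 * Real.exp (z 2) - 2 * κ₀ * Real.exp (z 2) * (c (z 0))^2) * z 2 / 2)
      (by decide) (RI.ofReal (by fun_prop) (by intro z t; simp))
      (RI.ofReal (by fun_prop) (by intro z t; simp)) ?_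
     intro z
     ring
     done)
  | (refine Bal.lin (p := fun z => 1 / 2)
      (q := fun z => (- Real.exp (z 2) - z 2 * Real.exp (z 2)
            - 2 * κ₀ * Real.exp (z 2) * (c (z 0))^2) / 2)
      (by decide) (RI.ofReal (by fun_prop) (by intro z t; simp))
      (RI.ofReal (by fun_prop) (by intro z t; simp)) ?_
     intro z
     ring
     done)
  | (refine Bal.lin (p := fun z => - Real.exp (-z 2) / 2)
      (q := fun z => (1 + z 2 + 2 * κ₀ * (c (z 0))^2) / 2)
      (by decide) (RI.ofReal (by fun_prop) (by intro z t; simp))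
      (RI.ofReal (by fun_prop) (by intro z t; simp)) ?_
     intro z
     ring
     done)

/-- The function `exp u` as a complex function. -/
def eu (z : Pt 4) : ℂ := ((Real.exp (z 0) : ℝ) : ℂ)

/-- The complex coordinate `x + i y e^u`. -/
def zeta (z : Pt 4) : ℂ := ((z 2 : ℝ) : ℂ) + Complex.I * (((z 3 : ℝ) : ℂ) * eu z)

/-- `exp (ζ/2)`. -/
def EE (z : Pt 4) : ℂ := Complex.exp (zeta z * (1/2))

theorem RI_eu : RI eu := RI.ofReal (by fun_prop) (by intro z t; simp)
theorem RI_x : RI (fun z => ((z 2 : ℝ) : ℂ)) := RI.ofReal (by fun_prop) (by intro z t; simp)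
theorem RI_y : RI (fun z => ((z 3 : ℝ) : ℂ)) := RI.ofReal (by fun_prop) (by intro z t; simp)
theorem RI_zeta : RI zeta := RI_x.add ((RI.const _).mul (RI_y.mul RI_eu))
theorem RI_EE : RI EE := (RI_zeta.mul (RI.const _)).cexp

theorem dA_eu (a : Fin 4) (x : Pt 4) : dA eu a x = if (0 : Fin 4) = a then eu x else 0 := by
  unfold eu
  rw [dA_ofReal (f := fun z : Pt 4 => Real.exp (z 0)) (by fun_prop),
    dA_exp (f := fun z : Pt 4 => z 0) (by fun_prop), dA_coord]
  split_ifs <;> simp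

theorem dA_ofcoord (i a : Fin 4) (x : Pt 4) :
    dA (fun z : Pt 4 => ((z i : ℝ) : ℂ)) a x = if i = a then 1 else 0 := by
  rw [dA_ofReal (f := fun z : Pt 4 => z i) (by fun_prop), dA_coord]
  split_ifs <;> simp

theorem dA_zeta (a : Fin 4) (x : Pt 4) : dA zeta a x =
    ![Complex.I * (x 3 * eu x), 0, 1, Complex.I * eu x] a := by
  unfold zeta
  rw [dA_add (RI_x.diff x) (((RI.const _).mul (RI_y.mul RI_eu)).diff x),
    dA_mul ((RI.const _).diff x) ((RI_y.mul RI_eu).diff x), dA_mul (RI_y.diff x) (RI_eu.diff x),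
    dA_const, dA_eu, dA_ofcoord, dA_ofcoord]
  revert a
  refine forall4 ?_ ?_ ?_ ?_ <;> simp

theorem dA_EE (a : Fin 4) (x : Pt 4) : dA EE a x =
    ![Complex.I * (x 3 * eu x), 0, 1, Complex.I * eu x] a * (1/2) * EE x := by
  unfold EE
  rw [dA_cexp ((RI_zeta.mul (RI.const _)).diff x), dA_mul (RI_zeta.diff x) ((RI.const _).diff x),
    dA_zeta, dA_const]
  simp

/-- The two basic 1-forms: `du` and `ϖ = exp(ζ/2) (dx + i e^u dy)`. -/
def th : Bool → Pt 4 → Fin 4 → ℂ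
  | true, _ => ![1, 0, 0, 0]
  | false, z => ![0, 0, EE z, Complex.I * (eu z * EE z)]

/-- Number of `u` slots. -/
def sw : Bool → ℤ
  | true => 1
  | false => 0

theorem th_bal (b : Bool) (a : Fin 4) : Bal (- wt a - sw b) (fun z => th b z a) := by
  revert a
  cases b <;> refine forall4 ?_ ?_ ?_ ?_ <;> simp only [th, Matrix.cons_val] <;>
  first
  | exact Bal.zero
  | exact Bal.of_RI (by decide) (RI.const _)
  | exact Bal.of_RI (by decide) RI_EE
  | exact Bal.of_RI (by decide) ((RI.const _).mul (RI_eu.mul RI_EE))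

/-- Covariant derivative of the basic 1-forms. -/
def nab (κ₀ : ℝ) (c : ℝ → ℝ) (b : Bool) (z : Pt 4) (a d : Fin 4) : ℂ :=
  dA (fun y => th b y d) a z - ∑ e, (Gam κ₀ c z e a d : ℂ) * th b z e

/-- Covariant derivative of the basic 1-forms, explicitly. -/
def NM (κ₀ : ℝ) (c : ℝ → ℝ) (z : Pt 4) : Bool → Matrix (Fin 4) (Fin 4) ℂ
  | true => !![((z 2 / 2 : ℝ) : ℂ), 0, 0, 0; 0, 0, 0, 0; 0, 0, 0, 0; 0, 0, 0, 0]
  | false => !![(((z 1 * Real.exp (-z 2) - 1 - z 2 - 2 * κ₀ * (c (z 0))^2) / 2 : ℝ) : ℂ) * EE z, 0,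
      Complex.I * (z 3 * eu z) * (1/2) * EE z,
      Complex.I * (z 3 * eu z) * (1/2) * (Complex.I * (eu z * EE z));
      0, 0, 0, 0; 0, 0, 0, 0; -(Complex.I * (eu z * EE z)), 0, 0, 0]

theorem exp_two_eu (z : Pt 4) : ((Real.exp (2 * z 0) : ℝ) : ℂ) = eu z * eu z := by
  unfold eu
  rw [← Complex.ofReal_mul, ← Real.exp_add, two_mul]

theorem nab_eq (κ₀ : ℝ) (c : ℝ → ℝ) (b : Bool) (z : Pt 4) (a d : Fin 4) :
    nab κ₀ c b z a d = NM κ₀ c z b a d := by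
  unfold nab
  have hI : Complex.I * Complex.I = -1 := Complex.I_mul_I
  have h1 : dA (fun y => Complex.I * (eu y * EE y)) a z =
      Complex.I * ((if (0 : Fin 4) = a then eu z else 0) * EE z + eu z *
       (![Complex.I * (z 3 * eu z), 0, 1, Complex.I * eu z] a * (1/2) * EE z)) := by
    rw [dA_mul ((RI.const _).diff z) ((RI_eu.mul RI_EE).diff z), dA_mul (RI_eu.diff z)
      (RI_EE.diff z), dA_const, dA_eu, dA_EE]
    ring
  have h2 : dA (fun y => EE y) a z = _ := dA_EE a z
  cases b
  · have key : ∀ d, dA (fun y => th false y d) a z = ![0, 0, dA (fun y => EE y) a z,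
        dA (fun y => Complex.I * (eu y * EE y)) a z] d := by
      refine forall4 ?_ ?_ ?_ ?_ <;> simp only [th, Matrix.cons_val, dA_const]
    rw [key, h1, h2]
    clear h1 h2 key
    revert a d
    refine forall4 ?_ ?_ ?_ ?_ <;> refine forall4 ?_ ?_ ?_ ?_ <;>
    simp only [Gam, NM, th, Fin.sum_univ_four, Matrix.of_apply, Matrix.cons_val, mul_zero,
      Complex.ofReal_zero, zero_mul, add_zero, zero_add, sub_zero, zero_sub] <;>
    simp [-Complex.ofReal_exp, exp_two_eu] <;> try ring_nf
    all_goals (simp [Complex.I_sq]; try ring)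
  · have key : ∀ d, dA (fun y => th true y d) a z = 0 := by
      refine forall4 ?_ ?_ ?_ ?_ <;> simp only [th, Matrix.cons_val, dA_const]
    rw [key]
    clear h1 h2 key
    revert a d
    refine forall4 ?_ ?_ ?_ ?_ <;> refine forall4 ?_ ?_ ?_ ?_ <;>
    simp [Gam, NM, th, Fin.sum_univ_four]

theorem nab_bal (κ₀ : ℝ) (c : ℝ → ℝ) (hc : ContDiff ℝ (⊤ : ℕ∞) c) (b : Bool) (a d : Fin 4) :
    Bal (- wt a - wt d - sw b - 1) (fun z => nab κ₀ c b z a d) := by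
  simp only [nab_eq]
  have hl : Bal 1 (fun z : Pt 4 =>
      (((z 1 * Real.exp (-z 2) - 1 - z 2 - 2 * κ₀ * (c (z 0))^2) / 2 : ℝ) : ℂ)) := by
    refine Bal.lin (p := fun z => Real.exp (-z 2) / 2)
      (q := fun z => -(1 + z 2 + 2 * κ₀ * (c (z 0))^2) / 2)
      (by decide) (RI.ofReal (by fun_prop) (by intro z t; simp))
      (RI.ofReal (by fun_prop) (by intro z t; simp)) ?_
    intro z
    ring
  revert a d
  cases b <;> refine forall4 ?_ ?_ ?_ ?_ <;> refine forall4 ?_ ?_ ?_ ?_ <;>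
  simp only [NM, Matrix.of_apply, Matrix.cons_val] <;>
  first
  | exact Bal.zero
  | (refine Bal.of_RI (by decide) (RI.ofReal (by fun_prop) ?_)
     intro z t
     simp
     done)
  | exact hl.mul (Bal.of_RI le_rfl RI_EE)
  | exact Bal.of_RI (by decide) ((RI.const _).mul (RI_eu.mul RI_EE)).neg
  | exact Bal.of_RI (by decide)
      ((((RI.const _).mul (RI_y.mul RI_eu)).mul (RI.const _)).mul RI_EE)
  | exact Bal.of_RI (by decide)
      ((((RI.const _).mul (RI_y.mul RI_eu)).mul (RI.const _)).mul ((RI.const _).mul (RI_eu.mul RI_EE)))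



/-- Complex tensor fields. -/
abbrev CT (k : ℕ) := Pt 4 → (Fin k → Fin 4) → ℂ

/-- Complex covariant derivative. -/
def covDC (κ₀ : ℝ) (c : ℝ → ℝ) {k : ℕ} (T : CT k) : CT (k+1) := fun x idx =>
  dA (fun y => T y fun m => idx m.succ) (idx 0) x
    - ∑ m : Fin k, ∑ e : Fin 4,
        (Gam κ₀ c x e (idx 0) (idx m.succ) : ℂ) * T x (Function.update (fun m' => idx m'.succ) m e)

theorem covD_re (κ₀ : ℝ) (c : ℝ → ℝ) (hc : Differentiable ℝ c) {k : ℕ} (T : CT k)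
    (hT : ∀ idx x, DifferentiableAt ℝ (fun y => T y idx) x) :
    covD (petrovEM κ₀ c) (fun x idx => (T x idx).re) = fun x idx => (covDC κ₀ c T x idx).re := by
  funext x idx
  unfold covD covDC
  rw [christoffel_petrov κ₀ c hc, pd_eq_dA, dA_re (hT _ x)]
  simp [Complex.re_sum]

theorem covDC_add (κ₀ : ℝ) (c : ℝ → ℝ) {k : ℕ} (T U : CT k)
    (hT : ∀ idx x, DifferentiableAt ℝ (fun y => T y idx) x)
    (hU : ∀ idx x, DifferentiableAt ℝ (fun y => U y idx) x) :
    covDC κ₀ c (fun x idx => T x idx + U x idx) =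
      fun x idx => covDC κ₀ c T x idx + covDC κ₀ c U x idx := by
  funext x idx
  unfold covDC
  rw [dA_add (hT _ x) (hU _ x)]
  simp only [mul_add, Finset.sum_add_distrib]
  ring

/-- Balanced tensor fields. -/
def BalT (s : ℤ) {k : ℕ} (T : CT k) : Prop :=
  ∀ idx, Bal (- (∑ m, wt (idx m)) - s) (fun z => T z idx)

theorem sum_update {k : ℕ} (idx : Fin k → Fin 4) (m : Fin k) (e : Fin 4) :
    ∑ m', wt (Function.update idx m e m') = ∑ m', wt (idx m') - wt (idx m) + wt e := by
  rw [← Finset.add_sum_erase _ _ (Finset.mem_univ m),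
    ← Finset.add_sum_erase _ (fun m' => wt (idx m')) (Finset.mem_univ m)]
  rw [Function.update_self, Finset.sum_congr rfl fun m' hm' => by
    rw [Function.update_of_ne (Finset.ne_of_mem_erase hm')]]
  ring

theorem BalT.covDC {κ₀ : ℝ} {c : ℝ → ℝ} (hc : ContDiff ℝ (⊤ : ℕ∞) c)
    (hc' : ContDiff ℝ (⊤ : ℕ∞) (deriv c)) {s : ℤ} {k : ℕ} {T : CT k} (hT : BalT s T) :
    BalT s (covDC κ₀ c T) := by
  intro idx
  unfold VSI.covDC
  rw [Fin.sum_univ_succ]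
  refine Bal.sub ?_ (Bal.sum _ fun m _ => Bal.sum _ fun e _ => ?_)
  · refine ((hT fun m => idx m.succ).dA_wt (idx 0)).le ?_
    omega
  · refine ((Gam_bal κ₀ c hc hc' e (idx 0) (idx m.succ)).mul (hT _)).le ?_
    rw [sum_update]
    omega

/-- The tensor `h θ₁ ⊗ ⋯ ⊗ θ_k`. -/
def monoC {k : ℕ} (θ : Fin k → Bool) (h : Pt 4 → ℂ) : CT k := fun x idx =>
  h x * ∏ m, th (θ m) x (idx m)

theorem th_diff (b : Bool) (a : Fin 4) (x : Pt 4) : DifferentiableAt ℝ (fun z => th b z a) x :=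
  (th_bal b a).diff x

theorem dA_prod {ι : Type*} [DecidableEq ι] (s : Finset ι) (f : ι → Pt 4 → ℂ) (a : Fin 4) (x : Pt 4)
    (hf : ∀ i, DifferentiableAt ℝ (f i) x) :
    dA (fun z => ∏ i ∈ s, f i z) a x = ∑ i ∈ s, dA (f i) a x * ∏ j ∈ s.erase i, f j x := by
  have := HasFDerivAt.finsetProd (u := s) (g := f) (x := x)
    (fun i _ => (hf i).hasFDerivAt)
  unfold dA
  rw [this.fderiv]
  simp only [_root_.sum_apply, _root_.smul_apply, smul_eq_mul]
  exact Finset.sum_congr rfl fun i _ => mul_comm _ _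

theorem covDC_monoC (κ₀ : ℝ) (c : ℝ → ℝ) {k : ℕ} (θ : Fin k → Bool) (h : Pt 4 → ℂ)
    (hh : ∀ x, DifferentiableAt ℝ h x) (x : Pt 4) (idx : Fin (k+1) → Fin 4) :
    covDC κ₀ c (monoC θ h) x idx =
      dA h (idx 0) x * ∏ m, th (θ m) x (idx m.succ)
      + h x * ∑ m, nab κ₀ c (θ m) x (idx 0) (idx m.succ) *
          ∏ m' ∈ Finset.univ.erase m, th (θ m') x (idx m'.succ) := by
  have hP : DifferentiableAt ℝ (fun y : Pt 4 => ∏ m, th (θ m) y (idx m.succ)) x :=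
    (Bal.prod Finset.univ fun m _ => th_bal (θ m) (idx m.succ)).diff x
  unfold covDC monoC nab
  rw [dA_mul (hh x) hP,
    dA_prod _ _ _ _ fun m => th_diff _ _ x]
  have key : ∀ (m : Fin k) (e : Fin 4),
      ∏ m', th (θ m') x (Function.update (fun m' => idx m'.succ) m e m') =
      th (θ m) x e * ∏ m' ∈ Finset.univ.erase m, th (θ m') x (idx m'.succ) := by
    intro m e
    rw [← Finset.mul_prod_erase _ _ (Finset.mem_univ m), Function.update_self]
    congr 1
    exact Finset.prod_congr rfl fun m' hm' => by
      rw [Function.update_of_ne (Finset.ne_of_mem_erase hm')]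
  simp only [key, sub_mul, Finset.sum_sub_distrib, mul_sub, Finset.sum_mul, Finset.mul_sum,
    add_sub_assoc]
  congr 2
  refine Finset.sum_congr rfl fun m _ => Finset.sum_congr rfl fun e _ => ?_
  ring

/-- Holomorphic (in the transverse coordinate) functions. -/
def Holo (h : Pt 4 → ℂ) : Prop := RI h ∧ ∀ z, dA h 3 z = Complex.I * eu z * dA h 2 z

/-- Derivative with respect to `w`, `dw = ϖ`. -/
def hder (h : Pt 4 → ℂ) : Pt 4 → ℂ := fun z => Complex.exp (- (zeta z * (1/2))) * dA h 2 z

theorem dA_symm {h : Pt 4 → ℂ} (hh : ContDiff ℝ (⊤ : ℕ∞) h) (a b : Fin 4) (x : Pt 4) :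
    dA (dA h a) b x = dA (dA h b) a x := by
  have hd : Differentiable ℝ (fderiv ℝ h) :=
    (hh.fderiv_right (m := (⊤ : ℕ∞)) (by simp)).differentiable (by simp)
  have key : ∀ a b : Fin 4, dA (dA h a) b x =
      fderiv ℝ (fderiv ℝ h) x (Pi.single b 1) (Pi.single a 1) := by
    intro a b
    unfold dA
    rw [fderiv_clm_apply (hd x) (by fun_prop)]
    simp
  rw [key, key]
  have : IsSymmSndFDerivAt ℝ h x := by
    refine (hh.contDiffAt).isSymmSndFDerivAt ?_
    rw [minSmoothness_of_isRCLikeNormedField]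
    exact WithTop.coe_le_coe.mpr (show (2 : ℕ∞) ≤ ⊤ from le_top)
  exact this _ _

theorem RI_En : RI (fun z => Complex.exp (- (zeta z * (1/2)))) :=
  (RI_zeta.mul (RI.const _)).neg.cexp

theorem dA_En (a : Fin 4) (x : Pt 4) : dA (fun z => Complex.exp (- (zeta z * (1/2)))) a x =
    -(![Complex.I * (x 3 * eu x), 0, 1, Complex.I * eu x] a * (1/2)) *
      Complex.exp (- (zeta x * (1/2))) := by
  rw [dA_cexp ((RI_zeta.mul (RI.const _)).neg.diff x), dA_neg,
    dA_mul (RI_zeta.diff x) ((RI.const _).diff x), dA_zeta, dA_const]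
  simp

theorem Holo.hder {h : Pt 4 → ℂ} (hh : Holo h) : Holo (hder h) := by
  refine ⟨RI_En.mul (hh.1.dA 2), fun z => ?_⟩
  unfold VSI.hder
  have h3 : dA h 3 = fun z => (Complex.I * eu z) * dA h 2 z := funext hh.2
  have h4 : dA (dA h 2) 3 z = Complex.I * eu z * dA (dA h 2) 2 z := by
    rw [dA_symm hh.1.1 2 3, h3, dA_mul (((RI.const _).mul RI_eu).diff z) ((hh.1.dA 2).diff z),
      dA_mul ((RI.const _).diff z) (RI_eu.diff z), dA_const, dA_eu]
    simp
  rw [dA_mul (RI_En.diff z) ((hh.1.dA 2).diff z), dA_mul (RI_En.diff z) ((hh.1.dA 2).diff z), h4,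
    dA_En, dA_En]
  simp only [Matrix.cons_val]
  ring

theorem Holo.bal {h : Pt 4 → ℂ} (hh : Holo h) (a : Fin 4) :
    Bal (- wt a - 1) (fun z => dA h a z - VSI.hder h z * th false z a) := by
  have hE : ∀ z, Complex.exp (- (zeta z * (1/2))) * EE z = 1 := fun z => by
    unfold EE; rw [← Complex.exp_add]; simp
  revert a
  refine forall4 ?_ ?_ ?_ ?_
  · simpa [th] using Bal.of_RI (d := - wt 0 - 1) (by decide) (hh.1.dA 0)
  · refine Bal.of_eq_zero fun z => ?_
    simp [th, hh.1.dA_one]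
  · refine Bal.of_eq_zero fun z => ?_
    simp only [th, VSI.hder, Matrix.cons_val]
    linear_combination (- dA h 2 z) * hE z
  · refine Bal.of_eq_zero fun z => ?_
    simp only [th, VSI.hder, Matrix.cons_val, hh.2]
    linear_combination (- (Complex.I * eu z) * dA h 2 z) * hE z

/-- Tensors whose leading part is built from `du` and `ϖ` only. -/
inductive Good {k : ℕ} : CT k → Prop
  | lead (θ : Fin k → Bool) (h : Pt 4 → ℂ) (hθ : ∑ m, sw (θ m) = 2) (hh : Holo h) :
      Good (monoC θ h)
  | rest (T : CT k) (hT : BalT 3 T) : Good T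
  | add {T U : CT k} (hT : Good T) (hU : Good U) : Good (fun x idx => T x idx + U x idx)

theorem monoC_bal {k : ℕ} (θ : Fin k → Bool) {h : Pt 4 → ℂ} (hh : RI h) :
    BalT (∑ m, sw (θ m)) (monoC θ h) := by
  intro idx
  refine Bal.RI_mul hh ((Bal.prod Finset.univ fun m _ => th_bal (θ m) (idx m)).le ?_)
  rw [Finset.sum_sub_distrib, Finset.sum_neg_distrib]

theorem Good.bal {k : ℕ} {T : CT k} (hT : Good T) : BalT 2 T := by
  induction hT with
  | lead θ h hθ hh => rw [← hθ]; exact monoC_bal θ hh.1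
  | rest T hT => exact fun idx => (hT idx).le (by omega)
  | add _ _ h1 h2 => exact fun idx => (h1 idx).add (h2 idx)

theorem Good.covDC {κ₀ : ℝ} {c : ℝ → ℝ} (hc : ContDiff ℝ (⊤ : ℕ∞) c)
    (hc' : ContDiff ℝ (⊤ : ℕ∞) (deriv c)) {k : ℕ} {T : CT k} (hT : Good T) :
    Good (covDC κ₀ c T) := by
  induction hT with
  | rest T hT => exact Good.rest _ (hT.covDC hc hc')
  | add hT hU h1 h2 =>
    rw [covDC_add _ _ _ _ (fun idx x => (hT.bal idx).diff x) (fun idx x => (hU.bal idx).diff x)]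
    exact h1.add h2
  | lead θ h hθ hh =>
    have key : VSI.covDC κ₀ c (monoC θ h) = fun x idx =>
        monoC (Fin.cons false θ : Fin (k+1) → Bool) (hder h) x idx +
        ((dA h (idx 0) x - hder h x * th false x (idx 0)) * ∏ m, th (θ m) x (idx m.succ)
         + h x * ∑ m, nab κ₀ c (θ m) x (idx 0) (idx m.succ) *
          ∏ m' ∈ Finset.univ.erase m, th (θ m') x (idx m'.succ)) := by
      funext x idx
      rw [covDC_monoC κ₀ c θ h hh.1.diff]
      unfold monoC
      rw [Fin.prod_univ_succ]
      simp only [Fin.cons_zero, Fin.cons_succ]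
      ring
    rw [key]
    refine Good.add (Good.lead _ _ ?_ hh.hder) (Good.rest _ fun idx => ?_)
    · rw [Fin.sum_univ_succ]
      simpa [sw] using hθ
    · rw [Fin.sum_univ_succ]
      refine Bal.add ?_ (Bal.RI_mul hh.1 (Bal.sum _ fun m _ => ?_))
      · refine ((hh.bal (idx 0)).mul
          (Bal.prod Finset.univ fun m _ => th_bal (θ m) (idx m.succ))).le ?_
        rw [Finset.sum_sub_distrib, Finset.sum_neg_distrib]
        omega
      · refine ((nab_bal κ₀ c hc (θ m) (idx 0) (idx m.succ)).mul
          (Bal.prod (Finset.univ.erase m) fun m' _ => th_bal (θ m') (idx m'.succ))).le ?_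
        have := Finset.add_sum_erase Finset.univ (fun m' => - wt (idx m'.succ) - sw (θ m'))
          (Finset.mem_univ m)
        rw [Finset.sum_sub_distrib (s := Finset.univ), Finset.sum_neg_distrib] at this
        omega



/-- Complexified field. -/
def FC (c : ℝ → ℝ) : CT 2 := fun x idx =>
  monoC ![true, false] (fun z => ((-c (z 0) : ℝ) : ℂ)) x idx
    + monoC ![false, true] (fun z => ((c (z 0) : ℝ) : ℂ)) x idx

theorem RI_fun {c : ℝ → ℝ} (hc : ContDiff ℝ (⊤ : ℕ∞) c) : RI (fun z => ((c (z 0) : ℝ) : ℂ)) :=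
  RI.ofReal (by fun_prop) (by intro z t; simp)

theorem RI_nfun {c : ℝ → ℝ} (hc : ContDiff ℝ (⊤ : ℕ∞) c) : RI (fun z => ((-c (z 0) : ℝ) : ℂ)) :=
  RI.ofReal (by fun_prop) (by intro z t; simp)

theorem dA_cfun {c : ℝ → ℝ} (hc : Differentiable ℝ c) (a : Fin 4) (x : Pt 4) :
    dA (fun z => ((c (z 0) : ℝ) : ℂ)) a x = (if (0 : Fin 4) = a then 1 else 0) * deriv c (x 0) := by
  rw [dA_ofReal (f := fun z : Pt 4 => c (z 0)) (by fun_prop), dA_fun hc]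
  split_ifs <;> simp

theorem dA_ncfun {c : ℝ → ℝ} (hc : Differentiable ℝ c) (a : Fin 4) (x : Pt 4) :
    dA (fun z => ((-c (z 0) : ℝ) : ℂ)) a x =
      -((if (0 : Fin 4) = a then 1 else 0) * deriv c (x 0)) := by
  rw [← dA_cfun hc, ← dA_neg]
  simp

theorem FC_bal {c : ℝ → ℝ} (hc : ContDiff ℝ (⊤ : ℕ∞) c) : BalT 1 (FC c) := fun idx =>
  (by simpa [sw] using monoC_bal ![true, false] (RI_nfun hc) idx : Bal _ _).add
  (by simpa [sw] using monoC_bal ![false, true] (RI_fun hc) idx)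

theorem EE_re (z : Pt 4) : (EE z).re = Real.exp (z 2 / 2) * Real.cos (z 3 * Real.exp (z 0) / 2) := by
  unfold EE zeta eu
  rw [Complex.exp_re]
  simp [-Complex.ofReal_exp]
  ring_nf

theorem EE_im (z : Pt 4) : (EE z).im = Real.exp (z 2 / 2) * Real.sin (z 3 * Real.exp (z 0) / 2) := by
  unfold EE zeta eu
  rw [Complex.exp_im]
  simp [-Complex.ofReal_exp]
  ring_nf

theorem FC_re (c : ℝ → ℝ) : petrovF c = fun x idx => (FC c x idx).re := by
  funext x idx
  rw [petrovF_eq]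
  unfold FC monoC
  simp only [Fin.prod_univ_two, petrovA_two, petrovA_three, Matrix.cons_val_zero,
    Matrix.cons_val_one]
  generalize idx 0 = i
  generalize idx 1 = j
  have h1 := EE_re x
  have h2 := EE_im x
  revert i j
  refine forall4 ?_ ?_ ?_ ?_ <;> refine forall4 ?_ ?_ ?_ ?_ <;>
    simp [th, h1, h2, eu, -Complex.ofReal_exp] <;> ring

/-- Coefficient of the leading term of the first derivative. -/
def hone (c : ℝ → ℝ) : Pt 4 → ℂ := fun z =>
  ((deriv c (z 0) : ℝ) : ℂ) + ((c (z 0) : ℝ) : ℂ) * (zeta z * (1/2))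

theorem hone_holo {c : ℝ → ℝ} (hc : ContDiff ℝ (⊤ : ℕ∞) c)
    (hc' : ContDiff ℝ (⊤ : ℕ∞) (deriv c)) : Holo (hone c) := by
  have hd : Differentiable ℝ c := hc.differentiable (by simp)
  have hd' : Differentiable ℝ (deriv c) := hc'.differentiable (by simp)
  refine ⟨(RI_fun hc').add ((RI_fun hc).mul (RI_zeta.mul (RI.const _))), fun z => ?_⟩
  unfold hone
  simp only [dA_add ((RI_fun hc').diff z) (((RI_fun hc).mul (RI_zeta.mul (RI.const (1/2)))).diff z),
    dA_mul ((RI_fun hc).diff z) ((RI_zeta.mul (RI.const (1/2))).diff z),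
    dA_mul (RI_zeta.diff z) ((RI.const (1/2)).diff z), dA_const, dA_zeta, dA_cfun hd, dA_cfun hd',
    Matrix.cons_val]
  simp
  ring

theorem Holo.neg {h : Pt 4 → ℂ} (hh : Holo h) : Holo (fun z => - h z) :=
  ⟨hh.1.neg, fun z => by rw [dA_neg, dA_neg, hh.2]; ring⟩

set_option maxHeartbeats 2000000 in
theorem covDC_FC (κ₀ : ℝ) {c : ℝ → ℝ} (hc : ContDiff ℝ (⊤ : ℕ∞) c) :
    covDC κ₀ c (FC c) = fun x idx => monoC ![true, true, false] (fun z => - hone c z) x idx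
      + monoC ![true, false, true] (hone c) x idx := by
  have hd : Differentiable ℝ c := hc.differentiable (by simp)
  unfold FC
  rw [covDC_add _ _ _ _ (fun idx x => (monoC_bal _ (RI_nfun hc) idx).diff x)
    (fun idx x => (monoC_bal _ (RI_fun hc) idx).diff x)]
  funext x idx
  rw [covDC_monoC _ _ _ _ (RI_nfun hc).diff, covDC_monoC _ _ _ _ (RI_fun hc).diff]
  unfold monoC hone zeta
  have e0 : (Finset.univ.erase (0 : Fin 2)) = {1} := by decide
  have e1 : (Finset.univ.erase (1 : Fin 2)) = {0} := by decide
  have s0 : (0 : Fin 2).succ = 1 := rfl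
  have s1 : (1 : Fin 2).succ = 2 := rfl
  simp only [Fin.sum_univ_two, Fin.prod_univ_two, Fin.prod_univ_three, e0, e1,
    Finset.prod_singleton, nab_eq, dA_cfun hd, dA_ncfun hd, Matrix.cons_val, s0, s1]
  generalize idx 0 = i
  generalize idx 1 = j
  generalize idx 2 = k
  revert i j k
  refine forall4 ?_ ?_ ?_ ?_ <;> refine forall4 ?_ ?_ ?_ ?_ <;> refine forall4 ?_ ?_ ?_ ?_ <;>
    simp only [th, NM, Matrix.of_apply, Matrix.cons_val, mul_zero, zero_mul, add_zero, zero_add,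
      mul_one, one_mul, neg_zero] <;> (try simp) <;> (try ring)

/-- Iterated complex covariant derivative. -/
def iterC (κ₀ : ℝ) (c : ℝ → ℝ) : (I : ℕ) → CT (2 + I)
  | 0 => FC c
  | I + 1 => covDC κ₀ c (iterC κ₀ c I)

theorem iterC_good (κ₀ : ℝ) {c : ℝ → ℝ} (hc : ContDiff ℝ (⊤ : ℕ∞) c)
    (hc' : ContDiff ℝ (⊤ : ℕ∞) (deriv c)) (I : ℕ) : Good (iterC κ₀ c (I + 1)) := by
  induction I with
  | zero =>
    have h := covDC_FC κ₀ hc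
    have : Good (fun x idx => monoC ![true, true, false] (fun z => - hone c z) x idx
      + monoC ![true, false, true] (hone c) x idx) :=
      Good.add (Good.lead _ _ (by decide) (hone_holo hc hc').neg)
        (Good.lead _ _ (by decide) (hone_holo hc hc'))
    rw [← h] at this
    exact this
  | succ I ih => exact ih.covDC hc hc'

theorem iterC_bal (κ₀ : ℝ) {c : ℝ → ℝ} (hc : ContDiff ℝ (⊤ : ℕ∞) c)
    (hc' : ContDiff ℝ (⊤ : ℕ∞) (deriv c)) (I : ℕ) :
    BalT (if I = 0 then 1 else 2) (iterC κ₀ c I) := by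
  cases I with
  | zero => exact FC_bal hc
  | succ I => simpa using (iterC_good κ₀ hc hc' I).bal

theorem iter_re (κ₀ : ℝ) {c : ℝ → ℝ} (hc : ContDiff ℝ (⊤ : ℕ∞) c)
    (hc' : ContDiff ℝ (⊤ : ℕ∞) (deriv c)) (I : ℕ) :
    covDIter (petrovEM κ₀ c) (petrovF c) I = fun x idx => (iterC κ₀ c I x idx).re := by
  induction I with
  | zero => exact FC_re c
  | succ I ih =>
    show covD _ _ = _
    rw [ih, covD_re κ₀ c (hc.differentiable (by simp)) _
      fun idx x => ((iterC_bal κ₀ hc hc' I) idx).diff x]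
    rfl



theorem value_wt (κ₀ : ℝ) (c : ℝ → ℝ) {k r : ℕ} (S : ConcomScheme k r) (T : TensorField 4 k)
    (s : Fin S.N → ℤ) (x : Pt 4)
    (hs : ∀ j idx, - s j < ∑ m, wt (idx m) → covDIter (petrovEM κ₀ c) T (S.ord j) x idx = 0)
    (free : Fin r → Fin 4) (hf : - (∑ j, s j) < ∑ m, wt (free m)) :
    S.value (petrovEM κ₀ c) T x free = 0 := by
  unfold ConcomScheme.value
  refine Finset.sum_eq_zero fun φ _ => ?_
  by_contra hne
  obtain ⟨h1, h2⟩ := mul_ne_zero_iff.mp hne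
  rw [petrovEM_inv, Finset.prod_ne_zero_iff] at h1
  rw [Finset.prod_ne_zero_iff] at h2
  have h1' : 0 ≤ ∑ i : Fin S.m, (wt (φ (i, false)) + wt (φ (i, true))) := by
    refine Finset.sum_nonneg fun i hi => ?_
    by_contra hlt
    exact h1 i hi (ginv_wt κ₀ c x _ _ (by omega))
  have h2' : ∑ j, ∑ t, wt (Sum.elim φ free (S.slots.symm ⟨j, t⟩)) ≤ ∑ j, - s j := by
    refine Finset.sum_le_sum fun j hj => ?_
    by_contra hlt
    exact h2 j hj (hs j _ (by omega))
  have h3 : ∑ j, ∑ t, wt (Sum.elim φ free (S.slots.symm ⟨j, t⟩)) =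
      ∑ i : Fin S.m, (wt (φ (i, false)) + wt (φ (i, true))) + ∑ m, wt (free m) := by
    rw [← Fintype.sum_sigma' (f := fun j t => wt (Sum.elim φ free (S.slots.symm ⟨j, t⟩)))]
    rw [Equiv.sum_comp S.slots.symm (fun p => wt (Sum.elim φ free p)), Fintype.sum_sum_type,
      Fintype.sum_prod_type]
    simp [add_comm]
  rw [Finset.sum_neg_distrib] at h2'
  omega

theorem wt_ge (a : Fin 4) : -1 ≤ wt a := by
  revert a; decide

theorem wt_gt (a : Fin 4) (h : a ≠ 0) : 0 ≤ wt a := by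
  revert h; revert a; decide

theorem pairing_zero (κ₀ : ℝ) (c : ℝ → ℝ) (x : Pt 4) (b b' : Bool) :
    ∑ q : Bool → Fin 4, (ginv κ₀ c x (q false) (q true) : ℂ) * (th b x (q false) * th b' x (q true))
      = 0 := by
  have : ∑ q : Bool → Fin 4, (ginv κ₀ c x (q false) (q true) : ℂ) *
      (th b x (q false) * th b' x (q true)) =
      ∑ i : Fin 4, ∑ j : Fin 4, (ginv κ₀ c x i j : ℂ) * (th b x i * th b' x j) := by
    rw [← Fintype.sum_prod_type']
    exact Fintype.sum_equiv (Equiv.boolArrowEquivProd (Fin 4)) _ _ fun v => rfl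
  rw [this]
  have hI : Complex.I * Complex.I = -1 := Complex.I_mul_I
  have he : ((Real.exp (x 2 + 2 * x 0) : ℝ) : ℂ) = ((Real.exp (x 2) : ℝ) : ℂ) * (eu x * eu x) := by
    rw [Real.exp_add, Complex.ofReal_mul, exp_two_eu]
  have h0 : eu x ≠ 0 := by unfold eu; exact_mod_cast (Real.exp_pos _).ne'
  have h1 : ((Real.exp (x 2) : ℝ) : ℂ) ≠ 0 := by exact_mod_cast (Real.exp_pos _).ne'
  cases b <;> cases b' <;>
    simp [th, ginv, Fin.sum_univ_four, -Complex.ofReal_exp, he]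
  field_simp
  simp [Complex.I_sq]

theorem mono_contr (κ₀ : ℝ) (c : ℝ → ℝ) (x : Pt 4) {K m r : ℕ} (hm : 0 < m) (θ : Fin K → Bool)
    (σ : ((Fin m × Bool) ⊕ Fin r) ≃ Fin K) (free : Fin r → Fin 4) :
    ∑ φ : Fin m × Bool → Fin 4, ((∏ i, ginv κ₀ c x (φ (i, false)) (φ (i, true)) : ℝ) : ℂ) *
      ∏ t, th (θ t) x (Sum.elim φ free (σ.symm t)) = 0 := by
  have h1 : ∀ φ : Fin m × Bool → Fin 4,
      ((∏ i, ginv κ₀ c x (φ (i, false)) (φ (i, true)) : ℝ) : ℂ) *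
      ∏ t, th (θ t) x (Sum.elim φ free (σ.symm t)) =
      (∏ i, (ginv κ₀ c x (φ (i, false)) (φ (i, true)) : ℂ) *
        (th (θ (σ (Sum.inl (i, false)))) x (φ (i, false)) *
         th (θ (σ (Sum.inl (i, true)))) x (φ (i, true)))) *
      ∏ j, th (θ (σ (Sum.inr j))) x (free j) := by
    intro φ
    rw [← Equiv.prod_comp σ (fun t => th (θ t) x (Sum.elim φ free (σ.symm t))),
      Fintype.prod_sum_type, Fintype.prod_prod_type]
    simp only [Equiv.symm_apply_apply, Sum.elim_inl, Sum.elim_inr, Fintype.prod_bool,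
      Finset.prod_mul_distrib, Complex.ofReal_prod]
    ring
  rw [Finset.sum_congr rfl fun φ _ => h1 φ, ← Finset.sum_mul]
  have h2 : ∑ φ : Fin m × Bool → Fin 4,
      (∏ i, (ginv κ₀ c x (φ (i, false)) (φ (i, true)) : ℂ) *
        (th (θ (σ (Sum.inl (i, false)))) x (φ (i, false)) *
         th (θ (σ (Sum.inl (i, true)))) x (φ (i, true)))) =
      ∑ φ : Fin m → Bool → Fin 4,
      (∏ i, (ginv κ₀ c x (φ i false) (φ i true) : ℂ) *
        (th (θ (σ (Sum.inl (i, false)))) x (φ i false) *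
         th (θ (σ (Sum.inl (i, true)))) x (φ i true))) :=
    Fintype.sum_equiv (Equiv.curry (Fin m) Bool (Fin 4)) _ _ fun φ => rfl
  have h3 := Finset.prod_univ_sum (fun _ : Fin m => (Finset.univ : Finset (Bool → Fin 4)))
    (fun i q => (ginv κ₀ c x (q false) (q true) : ℂ) *
        (th (θ (σ (Sum.inl (i, false)))) x (q false) *
         th (θ (σ (Sum.inl (i, true)))) x (q true)))
  rw [Fintype.piFinset_univ] at h3
  rw [h2, ← h3, Finset.prod_eq_zero (Finset.mem_univ (⟨0, hm⟩ : Fin m)) (pairing_zero κ₀ c x _ _),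
    zero_mul]

theorem good_contr (κ₀ : ℝ) (c : ℝ → ℝ) (x : Pt 4) {K m : ℕ} (hm : 0 < m) {T : CT K} (hT : Good T)
    (σ : ((Fin m × Bool) ⊕ Fin 2) ≃ Fin K) (free : Fin 2 → Fin 4) :
    ∑ φ : Fin m × Bool → Fin 4, ((∏ i, ginv κ₀ c x (φ (i, false)) (φ (i, true)) : ℝ) : ℂ) *
      T x (fun t => Sum.elim φ free (σ.symm t)) = 0 := by
  induction hT with
  | lead θ h hθ hh =>
    have := mono_contr κ₀ c x hm θ σ free
    unfold monoC
    simp only [mul_left_comm _ (h x)]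
    rw [← Finset.mul_sum, this, mul_zero]
  | add _ _ h1 h2 =>
    simp only [mul_add, Finset.sum_add_distrib]
    rw [h1, h2, add_zero]
  | rest T hT =>
    refine Finset.sum_eq_zero fun φ _ => ?_
    by_contra hne
    obtain ⟨h1, h2⟩ := mul_ne_zero_iff.mp hne
    rw [Complex.ofReal_ne_zero, Finset.prod_ne_zero_iff] at h1
    have h1' : 0 ≤ ∑ i : Fin m, (wt (φ (i, false)) + wt (φ (i, true))) := by
      refine Finset.sum_nonneg fun i hi => ?_
      by_contra hlt
      exact h1 i hi (ginv_wt κ₀ c x _ _ (by omega))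
    refine h2 ((hT _).eq_zero ?_ x)
    rw [Equiv.sum_comp σ.symm (fun p => wt (Sum.elim φ free p)), Fintype.sum_sum_type,
      Fintype.sum_prod_type, Fin.sum_univ_two]
    simp only [Sum.elim_inl, Sum.elim_inr, Fintype.sum_bool]
    have e1 := wt_ge (free 0)
    have e2 := wt_ge (free 1)
    simp only [add_comm (wt (φ (_, false)))] at h1'
    omega

section schemes
variable (κ₀ : ℝ) {c : ℝ → ℝ} (hc : ContDiff ℝ (⊤ : ℕ∞) c)
  (hc' : ContDiff ℝ (⊤ : ℕ∞) (deriv c))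

theorem value_zero_of_sum (S : ConcomScheme 2 2) (x : Pt 4) (free : Fin 2 → Fin 4)
    (hc : ContDiff ℝ (⊤ : ℕ∞) c) (hc' : ContDiff ℝ (⊤ : ℕ∞) (deriv c))
    (hf : - (∑ j, (if S.ord j = 0 then (1 : ℤ) else 2)) < wt (free 0) + wt (free 1)) :
    S.value (petrovEM κ₀ c) (petrovF c) x free = 0 := by
  refine value_wt κ₀ c S _ (fun j => if S.ord j = 0 then (1 : ℤ) else 2) x ?_ free
    (by rwa [Fin.sum_univ_two])
  intro j idx h
  rw [iter_re κ₀ hc hc']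
  have := (iterC_bal κ₀ hc hc' (S.ord j) idx).eq_zero (by omega) x
  simp only [this, Complex.zero_re]

theorem value_N_one (S : ConcomScheme 2 2) (hN : S.N = 1) (j : Fin S.N) (hj : 1 ≤ S.ord j)
    (hc : ContDiff ℝ (⊤ : ℕ∞) c) (hc' : ContDiff ℝ (⊤ : ℕ∞) (deriv c))
    (x : Pt 4) (free : Fin 2 → Fin 4) :
    S.value (petrovEM κ₀ c) (petrovF c) x free = 0 := by
  obtain ⟨N, hpos, ord, m, slots⟩ := S
  dsimp only at hN j hj
  subst hN
  obtain rfl : j = 0 := Subsingleton.elim _ _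
  have hm : 0 < m := by
    have := Fintype.card_congr slots
    simp at this
    omega
  unfold ConcomScheme.value
  simp only [iter_re κ₀ hc hc', petrovEM_inv, Fintype.prod_unique]
  let τ : (Σ j : Fin 1, Fin (2 + ord j)) ≃ Fin (2 + ord 0) :=
    Equiv.uniqueSigma (fun j : Fin 1 => Fin (2 + ord j))
  have hg : Good (iterC κ₀ c (ord 0)) := by
    obtain ⟨I, hI⟩ := Nat.exists_eq_succ_of_ne_zero (Nat.one_le_iff_ne_zero.mp hj)
    rw [hI]
    exact iterC_good κ₀ hc hc' I
  have := congrArg Complex.re (good_contr κ₀ c x hm hg (slots.trans τ) free)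
  simp only [Complex.re_sum, Complex.re_ofReal_mul, Complex.zero_re] at this
  exact this

theorem value_N_one_zero (S : ConcomScheme 2 2) (hN : S.N = 1) (h0 : ∀ j, S.ord j = 0) :
    ∃ a : ℝ, ∀ (x : Pt 4) (free : Fin 2 → Fin 4),
    S.value (petrovEM κ₀ c) (petrovF c) x free = a * petrovF c x free := by
  obtain ⟨N, hpos, ord, m, slots⟩ := S
  dsimp only at hN h0
  subst hN
  obtain rfl : ord = fun _ => 0 := funext h0
  have hm : m = 0 := by
    have := Fintype.card_congr slots
    simp at this
    omega
  subst hm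
  unfold ConcomScheme.value
  simp only [Fintype.prod_unique, covDIter, Finset.univ_eq_empty, Finset.prod_empty, one_mul]
  simp only [Fintype.sum_unique]
  have hinr : ∀ t : Fin 2, ∃ i : Fin 2, slots.symm ⟨0, t⟩ = Sum.inr i := by
    intro t
    rcases slots.symm ⟨0, t⟩ with p | i
    · exact p.1.elim0
    · exact ⟨i, rfl⟩
  choose p hp using hinr
  have hpi : p 0 ≠ p 1 := by
    intro h
    have : slots.symm ⟨0, (0 : Fin 2)⟩ = slots.symm ⟨0, (1 : Fin 2)⟩ := by rw [hp, hp, h]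
    have := slots.symm.injective this
    simp at this
  have hcase : (p 0 = 0 ∧ p 1 = 1) ∨ (p 0 = 1 ∧ p 1 = 0) := by
    revert hpi
    generalize p 0 = a
    generalize p 1 = b
    revert a b
    decide
  have hval : ∀ (φ : Fin 0 × Bool → Fin 4) (free : Fin 2 → Fin 4),
      (fun t : Fin 2 => Sum.elim φ free (slots.symm ⟨0, t⟩)) = fun t => free (p t) := by
    intro φ free
    funext t
    rw [hp, Sum.elim_inr]
  rcases hcase with ⟨a0, a1⟩ | ⟨a0, a1⟩
  · refine ⟨1, fun x free => ?_⟩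
    rw [one_mul]
    refine (congrArg (petrovF c x) (hval _ free)).trans ?_
    unfold petrovF
    simp only [a0, a1]
  · refine ⟨-1, fun x free => ?_⟩
    refine (congrArg (petrovF c x) (hval _ free)).trans ?_
    unfold petrovF
    simp only [a0, a1]
    ring

end schemes

theorem correction_zero (κ₀ : ℝ) {c : ℝ → ℝ} (hc : ContDiff ℝ (⊤ : ℕ∞) c)
    (hc' : ContDiff ℝ (⊤ : ℕ∞) (deriv c)) (Tc : TensorField 4 2)
    (h : IsCorrectionTensor (petrovEM κ₀ c) (petrovF c) Tc) : Tc = 0 := by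
  unfold IsCorrectionTensor at h
  induction h using Submodule.span_induction with
  | zero => rfl
  | add _ _ _ _ h1 h2 => rw [h1, h2, add_zero]
  | smul a _ _ h1 => rw [h1, smul_zero]
  | mem G hG =>
    obtain ⟨S, hS, rfl⟩ := hG
    funext x free
    have e1 := wt_ge (free 0)
    have e2 := wt_ge (free 1)
    have hge : ∀ j, (1 : ℤ) ≤ if S.ord j = 0 then (1 : ℤ) else 2 := fun j => by split_ifs <;> simp
    have hsum : (S.N : ℤ) ≤ ∑ j, if S.ord j = 0 then (1 : ℤ) else 2 := by
      have := Finset.sum_le_sum fun j (_ : j ∈ Finset.univ) => hge j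
      simpa using this
    by_cases h3 : 3 ≤ S.N
    · exact value_zero_of_sum κ₀ S x free hc hc' (by omega)
    · obtain ⟨j, hj⟩ := hS.resolve_left h3
      by_cases h1 : S.N = 1
      · exact value_N_one κ₀ S h1 j hj hc hc' x free
      · refine value_zero_of_sum κ₀ S x free hc hc' ?_
        have hN := S.hN
        have hlt : (∑ j : Fin S.N, (1 : ℤ)) < ∑ j, if S.ord j = 0 then (1 : ℤ) else 2 := by
          refine Finset.sum_lt_sum (fun j _ => hge j) ⟨j, Finset.mem_univ j, ?_⟩
          rw [if_neg (by omega)]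
          norm_num
        simp at hlt
        omega

theorem constructed_form (κ₀ : ℝ) {c : ℝ → ℝ} (hc : ContDiff ℝ (⊤ : ℕ∞) c)
    (hc' : ContDiff ℝ (⊤ : ℕ∞) (deriv c)) (G : TensorField 4 2)
    (h : IsConstructedFrom (petrovEM κ₀ c) (petrovF c) G) :
    ∃ a : ℝ, ∀ x free, ¬ (free 0 = 0 ∧ free 1 = 0) → G x free = a * petrovF c x free := by
  unfold IsConstructedFrom at h
  induction h using Submodule.span_induction with
  | zero => exact ⟨0, fun x free _ => by simp⟩
  | add _ _ _ _ h1 h2 =>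
    obtain ⟨a, ha⟩ := h1
    obtain ⟨b, hb⟩ := h2
    refine ⟨a + b, fun x free hf => ?_⟩
    rw [Pi.add_apply, Pi.add_apply, ha x free hf, hb x free hf, add_mul]
  | smul t _ _ h1 =>
    obtain ⟨a, ha⟩ := h1
    refine ⟨t * a, fun x free hf => ?_⟩
    rw [Pi.smul_apply, Pi.smul_apply, ha x free hf, smul_eq_mul, mul_assoc]
  | mem G hG =>
    obtain ⟨S, rfl⟩ := hG
    by_cases h1 : S.N = 1
    · by_cases h0 : ∀ j, S.ord j = 0
      · obtain ⟨a, ha⟩ := value_N_one_zero κ₀ (c := c) S h1 h0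
        exact ⟨a, fun x free _ => ha x free⟩
      · obtain ⟨j, hj⟩ := not_forall.mp h0
        refine ⟨0, fun x free _ => ?_⟩
        rw [value_N_one κ₀ S h1 j (by omega) hc hc' x free, zero_mul]
    · refine ⟨0, fun x free hf => ?_⟩
      rw [zero_mul]
      refine value_zero_of_sum κ₀ S x free hc hc' ?_
      have hge : ∀ j, (1 : ℤ) ≤ if S.ord j = 0 then (1 : ℤ) else 2 := fun j => by split_ifs <;> simp
      have hsum : (S.N : ℤ) ≤ ∑ j, if S.ord j = 0 then (1 : ℤ) else 2 := by
        have := Finset.sum_le_sum fun j (_ : j ∈ Finset.univ) => hge j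
        simpa using this
      have hN := S.hN
      have e1 := wt_ge (free 0)
      have e2 := wt_ge (free 1)
      by_cases hz : free 0 = 0
      · have := wt_gt (free 1) fun h => hf ⟨hz, h⟩
        omega
      · have := wt_gt (free 0) hz
        omega

theorem constructed_maxwell (h4 : 2 + 2 = 4) (κ₀ : ℝ) {c : ℝ → ℝ} (hc : ContDiff ℝ (⊤ : ℕ∞) c)
    (hc' : ContDiff ℝ (⊤ : ℕ∞) (deriv c)) (G : TensorField 4 2)
    (h : IsConstructedFrom (petrovEM κ₀ c) (petrovF c) G) (halt : IsAlternating G)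
    (x : Pt 4) (idx : Fin 3 → Fin 4) : extD (hodge h4 (petrovEM κ₀ c) G) x idx = 0 := by
  obtain ⟨a, ha⟩ := constructed_form κ₀ hc hc' G h
  have hG : G = fun x free => a * petrovF c x free := by
    funext y free
    by_cases hf : free 0 = 0 ∧ free 1 = 0
    · have h1 := halt y free (Equiv.swap 0 1)
      have h2 : free ∘ (Equiv.swap (0 : Fin 2) 1) = free := by
        funext i
        fin_cases i <;> simp [hf.1, hf.2]
      rw [h2, Equiv.Perm.sign_swap (by decide)] at h1
      have h3 : petrovF c y free = 0 := by simp [petrovF, hf.1, hf.2]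
      rw [h3, mul_zero]
      push_cast at h1
      linarith
    · exact ha y free hf
  have hh : hodge h4 (petrovEM κ₀ c) G =
      fun x idx => a * hodge h4 (petrovEM κ₀ c) (petrovF c) x idx := by
    funext y v
    rw [hG]
    unfold hodge raiseAll
    simp only [Finset.mul_sum, Finset.sum_mul]
    refine Finset.sum_congr rfl fun _ _ => Finset.sum_congr rfl fun _ _ => ?_
    ring
  have hM := (maxwell_petrov h4 κ₀ c (hc.differentiable (by simp))).2 x idx
  rw [hh]
  unfold extD at hM ⊢
  simp only [pd_eq_dA, dA_const_mul] at hM ⊢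
  simp only [mul_left_comm _ a]
  rw [← Finset.mul_sum, hM, mul_zero]


/-- the backreacted Petrov metric together with the null Maxwell
2-form `F` is an exact Einstein–Maxwell solution of Weyl type III, and it remains an
exact solution of Einstein gravity coupled to any generalized electrodynamics. -/
theorem petrovEM_exact_solution (κ₀ : ℝ) (c : ℝ → ℝ) (hc : ContDiff ℝ (⊤ : ℕ∞) c) :
    MaxwellEqs (by norm_num : 2 + 2 = 4) (petrovEM κ₀ c) (petrovF c) ∧
    (∀ (x : Pt 4) (a b : Fin 4),
      ricci (petrovEM κ₀ c) x a b
        - (1/2) * ricciScalar (petrovEM κ₀ c) x * (petrovEM κ₀ c) x a b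
        = κ₀ * emTensor (petrovEM κ₀ c) (petrovF c) x a b) ∧
    BoostOrderLE (petrovEM κ₀ c) ellR (weyl (petrovEM κ₀ c)) (-1) ∧
    (∀ G : TensorField 4 2,
      IsConstructedFrom (petrovEM κ₀ c) (petrovF c) G → IsAlternating G →
      ∀ x idx, extD (hodge (by norm_num : 2 + 2 = 4) (petrovEM κ₀ c) G) x idx = 0) ∧
    (∀ Tc : TensorField 4 2, IsCorrectionTensor (petrovEM κ₀ c) (petrovF c) Tc →
      ∀ (x : Pt 4) (a b : Fin 4),
        ricci (petrovEM κ₀ c) x a b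
          - (1/2) * ricciScalar (petrovEM κ₀ c) x * (petrovEM κ₀ c) x a b
          = κ₀ * (emTensor (petrovEM κ₀ c) (petrovF c) x a b + Tc x ![a, b])) := by
  have hd : Differentiable ℝ c := hc.differentiable (by simp)
  have hc' : ContDiff ℝ (⊤ : ℕ∞) (deriv c) := (contDiff_infty_iff_deriv.mp hc).2
  have hd' : Differentiable ℝ (deriv c) := hc'.differentiable (by simp)
  refine ⟨maxwell_petrov _ κ₀ c hd, einstein_petrov κ₀ c hd hd', weyl_boost κ₀ c hd hd', ?_, ?_⟩
  · intro G hG halt x idx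
    exact constructed_maxwell _ κ₀ hc hc' G hG halt x idx
  · intro Tc hT x a b
    rw [correction_zero κ₀ hc hc' Tc hT, einstein_petrov κ₀ c hd hd']
    simp

end VSI
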